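/- arXiv:1707.05661 — 2 statements merged into one kernel-verified Lean document; each statement's English description precedes it below -/
import Mathlib

section
/- The class of σ-scattered linear orders is well quasi-ordered by embeddability: for every sequence ⟨L_i : i ∈ ℕ⟩ of σ-scattered linear orders there exist indices i < j such that L_i order-embeds into L_j. -/
/-- A linear order is scattered if the rationals do not order-embed into it. -/
def Scattered (α : Type*) [LinearOrder α] : Prop := IsEmpty (ℚ ↪o α)

/-- A linear order is σ-scattered if it is the union of countably many subsets,
each scattered in its induced order. -/
def SigmaScattered (α : Type*) [LinearOrder α] : Prop :=
  ∃ A : ℕ → Set α, (⋃ n, A n) = Set.univ ∧ ∀ n, Scattered (A n)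

namespace LaverBQO
open Set

/-- Local constancy on the infinite subsets of `D`. -/
def LC {β : Type*} (D : Set ℕ) (f : Set ℕ → β) : Prop :=
  ∀ X ⊆ D, X.Infinite → ∃ k, ∀ Y ⊆ D, Y.Infinite → Y ∩ Iio k = X ∩ Iio k → f Y = f X

/-- Shift. -/
def sh (X : Set ℕ) : Set ℕ := X \ {sInf X}

lemma sh_sub (X : Set ℕ) : sh X ⊆ X := sdiff_subset

lemma sh_inf {X : Set ℕ} (h : X.Infinite) : (sh X).Infinite := h.sdiff (finite_singleton _)

lemma LC.mono {β : Type*} {D D' : Set ℕ} {f : Set ℕ → β} (h : LC D f) (hD : D' ⊆ D) : LC D' f := by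
  intro X hX hi
  obtain ⟨k, hk⟩ := h X (hX.trans hD) hi
  exact ⟨k, fun Y hY hYi e => hk Y (hY.trans hD) hYi e⟩

lemma inter_Iio_mono {X Y : Set ℕ} {k l : ℕ} (h : Y ∩ Iio l = X ∩ Iio l) (hk : k ≤ l) :
    Y ∩ Iio k = X ∩ Iio k := by
  ext n
  have := congrArg (fun S => n ∈ S) h
  simp only [mem_inter_iff, mem_Iio, eq_iff_iff] at this ⊢
  constructor <;> intro hn <;> exact ⟨by have := this; grind, hn.2⟩

lemma sh_inter {X Y : Set ℕ} {k : ℕ} (hX : X.Infinite) (hY : Y.Infinite) (hk : sInf X < k)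
    (h : Y ∩ Iio k = X ∩ Iio k) : sh Y ∩ Iio k = sh X ∩ Iio k := by
  have h1 : sInf X ∈ X := Nat.sInf_mem hX.nonempty
  have h2 : sInf Y ∈ Y := Nat.sInf_mem hY.nonempty
  have h3 : sInf X ∈ Y ∩ Iio k := h ▸ ⟨h1, hk⟩
  have h4 : sInf Y ≤ sInf X := Nat.sInf_le h3.1
  have h5 : sInf Y ∈ X ∩ Iio k := h ▸ ⟨h2, lt_of_le_of_lt h4 hk⟩
  have h6 : sInf Y = sInf X := le_antisymm h4 (Nat.sInf_le h5.1)
  unfold sh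
  rw [h6, ← inter_sdiff_right_comm, ← inter_sdiff_right_comm, h]

lemma LC.comp {β γ : Type*} {D : Set ℕ} {f : Set ℕ → β} (h : LC D f) (G : β → γ) :
    LC D (fun X => G (f X)) := by
  intro X hX hi
  obtain ⟨k, hk⟩ := h X hX hi
  exact ⟨k, fun Y hY hYi e => congrArg G (hk Y hY hYi e)⟩

lemma LC.sh {β : Type*} {D : Set ℕ} {f : Set ℕ → β} (h : LC D f) :
    LC D (fun X => f (sh X)) := by
  intro X hX hi
  obtain ⟨k, hk⟩ := h (LaverBQO.sh X) ((sh_sub X).trans hX) (sh_inf hi)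
  refine ⟨max k (sInf X + 1), fun Y hY hYi e => hk _ ((sh_sub Y).trans hY) (sh_inf hYi) ?_⟩
  exact inter_Iio_mono (sh_inter hi hYi (by omega) e) (le_max_left _ _)

lemma LC.comp2 {β β' γ : Type*} {D : Set ℕ} {f : Set ℕ → β} {g : Set ℕ → β'}
    (h : LC D f) (h' : LC D g) (G : β → β' → γ) :
    LC D (fun X => G (f X) (g X)) := by
  intro X hX hi
  obtain ⟨k, hk⟩ := h X hX hi
  obtain ⟨l, hl⟩ := h' X hX hi
  refine ⟨max k l, fun Y hY hYi e => ?_⟩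
  simp only
  rw [hk Y hY hYi (inter_Iio_mono e (le_max_left _ _)),
    hl Y hY hYi (inter_Iio_mono e (le_max_right _ _))]

lemma LC.pi {ι : Type*} [Finite ι] {β : Type*} {D : Set ℕ} {f : ι → Set ℕ → β}
    (h : ∀ i, LC D (f i)) : LC D (fun X i => f i X) := by
  intro X hX hi
  choose k hk using fun i => h i X hX hi
  obtain ⟨l, hl⟩ := (Set.finite_range k).bddAbove
  refine ⟨l, fun Y hY hYi e => funext fun i => hk i Y hY hYi (inter_Iio_mono e (hl ⟨i, rfl⟩))⟩

lemma inf_diff_Iio {X : Set ℕ} (h : X.Infinite) (k : ℕ) : (X \ Iio k).Infinite :=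
  h.sdiff (finite_Iio k)

/-- Existence of a homogeneous set after prefix `s`. -/
def RP {κ : Type*} (c : Set ℕ → κ) (D s : Set ℕ) (k : ℕ) : Prop :=
  ∀ A ⊆ D, A.Infinite → A ⊆ Ici k → ∃ B ⊆ A, B.Infinite ∧ ∃ v, ∀ Z ⊆ B, Z.Infinite → c (s ∪ Z) = v

lemma RP_step {κ : Type*} [Finite κ] (c : Set ℕ → κ) (D s : Set ℕ) (k : ℕ)
    (h : ∀ n ∈ D, k ≤ n → RP c D (s ∪ {n}) (n + 1)) : RP c D s k := by
  intro A hAD hAi hAk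
  have step : ∀ E : {E : Set ℕ // E ⊆ A ∧ E.Infinite}, ∃ (B : {E : Set ℕ // E ⊆ A ∧ E.Infinite})
      (v : κ), B.1 ⊆ E.1 ∧ (∀ x ∈ B.1, sInf E.1 < x) ∧
      ∀ Z ⊆ B.1, Z.Infinite → c (s ∪ {sInf E.1} ∪ Z) = v := by
    rintro ⟨E, hEA, hEi⟩
    have hm : sInf E ∈ E := Nat.sInf_mem hEi.nonempty
    obtain ⟨B, hB, hBi, v, hv⟩ := h (sInf E) (hAD (hEA hm)) (hAk (hEA hm)) (E \ Iio (sInf E + 1))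
      (sdiff_subset.trans (hEA.trans hAD)) (inf_diff_Iio hEi _) (by intro x hx; simpa using hx.2)
    refine ⟨⟨B, (hB.trans sdiff_subset).trans hEA, hBi⟩, v, hB.trans sdiff_subset, ?_, hv⟩
    intro x hx
    have := (hB hx).2
    simp at this
    simpa using this
  choose nx v h1 h2 h3 using step
  let S : ℕ → {E : Set ℕ // E ⊆ A ∧ E.Infinite} := fun i => nx^[i] ⟨A, subset_rfl, hAi⟩
  have hS : ∀ i, S (i + 1) = nx (S i) := fun i => Function.iterate_succ_apply' _ _ _
  let n : ℕ → ℕ := fun i => sInf (S i).1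
  have hn : ∀ i, n i ∈ (S i).1 := fun i => Nat.sInf_mem (S i).2.2.nonempty
  have hanti : Antitone fun i => (S i).1 := antitone_nat_of_succ_le fun i => by
    rw [hS]; exact h1 _
  have hlt : StrictMono n := strictMono_nat_of_lt_succ fun i => by
    apply h2; rw [← hS]; exact hn _
  obtain ⟨w, hw⟩ := Finite.exists_infinite_fiber (fun i => v (S i))
  rw [Set.infinite_coe_iff] at hw
  refine ⟨n '' ((fun i => v (S i)) ⁻¹' {w}), ?_, hw.image hlt.injective.injOn, w, ?_⟩
  · rintro _ ⟨i, -, rfl⟩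
    exact (S i).2.1 (hn i)
  · intro Z hZ hZi
    have hm := Nat.sInf_mem hZi.nonempty
    obtain ⟨i, hi, him⟩ := hZ hm
    have e : s ∪ Z = s ∪ {sInf (S i).1} ∪ sh Z := by
      rw [union_assoc]; congr 1
      change Z = {n i} ∪ (Z \ {sInf Z})
      rw [him]; ext x; simp; grind
    rw [e, h3 (S i) _ _ (sh_inf hZi)]
    · exact hi
    · rintro x ⟨hx, hx'⟩
      obtain ⟨j, hj, rfl⟩ := hZ hx
      have : n i < n j := by
        rw [him]; exact lt_of_le_of_ne (Nat.sInf_le hx) (fun h => hx' (by simp [h]))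
      have hij : i + 1 ≤ j := hlt.lt_iff_lt.1 this
      rw [← hS]
      exact hanti hij (hn j)

theorem ramsey {κ : Type*} [Finite κ] {D : Set ℕ} (hD : D.Infinite) {c : Set ℕ → κ} (hc : LC D c) :
    ∃ Y ⊆ D, Y.Infinite ∧ ∃ v, ∀ X ⊆ Y, X.Infinite → c X = v := by
  suffices h : RP c D ∅ 0 by
    obtain ⟨B, hB, hBi, v, hv⟩ := h D subset_rfl hD (fun x _ => Nat.zero_le x)
    exact ⟨B, hB, hBi, v, by simpa using hv⟩
  by_contra hcon
  let T := {p : Set ℕ × ℕ // ¬ RP c D p.1 p.2}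
  have step : ∀ p : T, ∃ q : T, ∃ n, n ∈ D ∧ p.1.2 ≤ n ∧ q.1 = (p.1.1 ∪ {n}, n + 1) := by
    rintro ⟨⟨s, k⟩, h⟩
    by_contra hh
    apply h
    apply RP_step
    intro n hn hk
    by_contra h'
    exact hh ⟨⟨(s ∪ {n}, n + 1), h'⟩, n, hn, hk, rfl⟩
  choose nx n h1 h2 h3 using step
  let S : ℕ → T := fun i => nx^[i] ⟨(∅, 0), hcon⟩
  have hS : ∀ i, S (i + 1) = nx (S i) := fun i => Function.iterate_succ_apply' _ _ _
  have hS1 : ∀ i, (S (i+1)).1.1 = (S i).1.1 ∪ {n (S i)} := fun i => by rw [hS, h3]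
  have hS2 : ∀ i, (S (i+1)).1.2 = n (S i) + 1 := fun i => by rw [hS, h3]
  let X := Set.range fun i => n (S i)
  have hlt : StrictMono fun i => n (S i) := strictMono_nat_of_lt_succ fun i => by
    have := h2 (S (i+1)); rw [hS2] at this; exact this
  have hXi : X.Infinite := Set.infinite_range_of_injective hlt.injective
  have hXD : X ⊆ D := by rintro _ ⟨i, rfl⟩; exact h1 _
  have hSX : ∀ i, (S i).1.1 = (fun i => n (S i)) '' Iio i := by
    intro i
    induction i with
    | zero => simp [S]
    | succ i ih => rw [hS1, ih]; ext x; simp; grind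
  obtain ⟨k, hk⟩ := hc X hXD hXi
  have hki : ∃ i, k ≤ (S (i+1)).1.2 := ⟨k, by rw [hS2]; have := hlt.id_le k; simp at this; omega⟩
  obtain ⟨i, hi⟩ := hki
  apply (S (i+1)).2
  intro A hAD hAi hAk
  refine ⟨A, subset_rfl, hAi, c X, fun Z hZ hZi => hk _ ?_ (hZi.mono subset_union_right) ?_⟩
  · rw [hSX]
    refine union_subset ?_ (hZ.trans hAD)
    rintro _ ⟨j, -, rfl⟩; exact h1 _
  · ext x
    simp only [mem_inter_iff, mem_union, mem_Iio]
    constructor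
    · rintro ⟨h | h, hx⟩
      · rw [hSX] at h; obtain ⟨j, -, rfl⟩ := h; exact ⟨⟨j, rfl⟩, hx⟩
      · have := hAk (hZ h); simp only [mem_Ici] at this; omega
    · rintro ⟨⟨j, rfl⟩, hx⟩
      refine ⟨Or.inl ?_, hx⟩
      rw [hSX]
      refine ⟨j, ?_, rfl⟩
      simp only at hx
      rw [hS2] at hi
      have : n (S j) < n (S (i+1)) := by
        have := h2 (S (i+1)); rw [hS2] at this; omega
      exact hlt.lt_iff_lt.1 this

end LaverBQO
namespace LaverBQO
open Set

section MBA
variable {Q : Type*} (r lt : Q → Q → Prop)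

/-- Good arrays: infinite domain, locally constant, bad. -/
def BadA (D : Set ℕ) (f : Set ℕ → Q) : Prop :=
  D.Infinite ∧ LC D f ∧ ∀ X ⊆ D, X.Infinite → ¬ r (f X) (f (sh X))

/-- Reflexive closure. -/
def le' (a b : Q) : Prop := a = b ∨ lt a b

/-- Array extension order. -/
def leA (D' : Set ℕ) (f' : Set ℕ → Q) (D : Set ℕ) (f : Set ℕ → Q) : Prop :=
  D' ⊆ D ∧ ∀ X ⊆ D', X.Infinite → le' lt (f' X) (f X)

variable {r lt}

lemma BadA.mono {D D' : Set ℕ} {f : Set ℕ → Q} (h : BadA r D f) (hD : D' ⊆ D) (hi : D'.Infinite) :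
    BadA r D' f :=
  ⟨hi, h.2.1.mono hD, fun X hX => h.2.2 X (hX.trans hD)⟩

lemma le'_trans (ht : ∀ a b c, lt a b → lt b c → lt a c) {a b c : Q} (h : le' lt a b)
    (h' : le' lt b c) : le' lt a c := by
  rcases h with rfl | h
  · exact h'
  · rcases h' with rfl | h'
    · exact Or.inr h
    · exact Or.inr (ht _ _ _ h h')

lemma leA_trans (ht : ∀ a b c, lt a b → lt b c → lt a c) {D1 D2 D3 : Set ℕ} {f1 f2 f3 : Set ℕ → Q}
    (h : leA lt D1 f1 D2 f2) (h' : leA lt D2 f2 D3 f3) : leA lt D1 f1 D3 f3 :=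
  ⟨h.1.trans h'.1, fun X hX hi => le'_trans ht (h.2 X hX hi) (h'.2 X (hX.trans h.1) hi)⟩

lemma leA_refl (D : Set ℕ) (f : Set ℕ → Q) : leA lt D f D f := ⟨subset_rfl, fun _ _ _ => Or.inl rfl⟩


variable (r lt)
/-- `Y` carries a bad array strictly below `f`. -/
def Mov (D : Set ℕ) (f : Set ℕ → Q) (Y : Set ℕ) : Prop :=
  Y ⊆ D ∧ ∃ h, BadA r Y h ∧ ∀ X ⊆ Y, X.Infinite → lt (h X) (f X)

/-- Refinement where changes happen only inside movable sets containing `s`. -/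
def leS (s : Set ℕ) (D' : Set ℕ) (f' : Set ℕ → Q) (D : Set ℕ) (f : Set ℕ → Q) : Prop :=
  leA lt D' f' D f ∧ ∀ X ⊆ D', X.Infinite → f' X ≠ f X → ∃ Y, X ⊆ Y ∧ s ⊆ Y ∧ Mov r lt D f Y

/-- Permanently unstuck. -/
def UU (D : Set ℕ) (f : Set ℕ → Q) (m : ℕ) (s : Set ℕ) : Prop :=
  ∀ D' f', BadA r D' f' → leS r lt s D' f' D f → D ∩ Iio m ⊆ D' → ∃ Y, s ⊆ Y ∧ Mov r lt D' f' Y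
variable {r lt}

lemma lt_le' (ht : ∀ a b c, lt a b → lt b c → lt a c) {a b c : Q} (h : lt a b)
    (h' : le' lt b c) : lt a c := by
  rcases h' with rfl | h'
  · exact h
  · exact ht _ _ _ h h'

lemma Mov.up (ht : ∀ a b c, lt a b → lt b c → lt a c) {D D' : Set ℕ} {f f' : Set ℕ → Q} {Y : Set ℕ}
    (h : Mov r lt D' f' Y) (hl : leA lt D' f' D f) : Mov r lt D f Y := by
  obtain ⟨h1, g, h2, h3⟩ := h
  exact ⟨h1.trans hl.1, g, h2, fun X hX hi => lt_le' ht (h3 X hX hi) (hl.2 X (hX.trans h1) hi)⟩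

lemma leS.trans (ht : ∀ a b c, lt a b → lt b c → lt a c) {s D1 D2 D3 : Set ℕ}
    {f1 f2 f3 : Set ℕ → Q}
    (h : leS r lt s D1 f1 D2 f2) (h' : leS r lt s D2 f2 D3 f3) : leS r lt s D1 f1 D3 f3 := by
  refine ⟨leA_trans ht h.1 h'.1, fun X hX hi hne => ?_⟩
  by_cases e : f2 X = f3 X
  · obtain ⟨Y, h1, h2, h3⟩ := h.2 X hX hi (by rwa [e])
    exact ⟨Y, h1, h2, h3.up ht h'.1⟩
  · exact h'.2 X (hX.trans h.1.1) hi e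

lemma leS_refl (s D : Set ℕ) (f : Set ℕ → Q) : leS r lt s D f D f :=
  ⟨leA_refl _ _, fun _ _ _ h => absurd rfl h⟩

lemma leS.weak {s s' D1 D2 : Set ℕ} {f1 f2 : Set ℕ → Q} (hs : s' ⊆ s)
    (h : leS r lt s D1 f1 D2 f2) : leS r lt s' D1 f1 D2 f2 :=
  ⟨h.1, fun X hX hi hne => by
    obtain ⟨Y, h1, h2, h3⟩ := h.2 X hX hi hne
    exact ⟨Y, h1, hs.trans h2, h3⟩⟩

lemma UU.down (ht : ∀ a b c, lt a b → lt b c → lt a c) {D D' s : Set ℕ} {f f' : Set ℕ → Q} {m : ℕ}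
    (h : UU r lt D f m s) (hl : leS r lt s D' f' D f) (hm : D ∩ Iio m ⊆ D') : UU r lt D' f' m s := by
  intro D2 f2 h1 h2 h3
  exact h D2 f2 h1 (h2.trans ht hl) (fun x hx => h3 ⟨hm hx, hx.2⟩)

lemma mba_key (ht : ∀ a b c, lt a b → lt b c → lt a c) {D s : Set ℕ} {f : Set ℕ → Q} {m : ℕ}
    (hf : BadA r D f) (hU : UU r lt D f m s) :
    ∃ D' f' x, BadA r D' f' ∧ leS r lt s D' f' D f ∧ D ∩ Iio m ⊆ D' ∧ x ∈ D' ∧ m ≤ x ∧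
      UU r lt D' f' (x+1) (s ∪ {x}) := by
  by_contra hcon
  let St := {p : (Set ℕ × (Set ℕ → Q)) × ℕ // BadA r p.1.1 p.1.2 ∧ leS r lt s p.1.1 p.1.2 D f ∧
    D ∩ Iio m ⊆ p.1.1 ∧ m ≤ p.2}
  have step : ∀ p : St, ∃ (q : St) (x : ℕ), q.1.2 = x + 1 ∧ p.1.2 ≤ x ∧ x ∈ q.1.1.1 ∧
      p.1.1.1 ∩ Iio p.1.2 ⊆ q.1.1.1 ∧
      leS r lt (s ∪ {x}) q.1.1.1 q.1.1.2 p.1.1.1 p.1.1.2 ∧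
      ¬ ∃ Y, s ∪ {x} ⊆ Y ∧ Mov r lt q.1.1.1 q.1.1.2 Y := by
    rintro ⟨⟨⟨D1, f1⟩, m1⟩, h1, h2, h3, h4⟩
    simp only at h1 h2 h3 h4
    obtain ⟨x, hx, hx'⟩ := h1.1.exists_gt m1
    have hn : ¬ UU r lt D1 f1 (x+1) (s ∪ {x}) := fun h =>
      hcon ⟨D1, f1, x, h1, h2, h3, hx, by omega, h⟩
    unfold UU at hn
    push Not at hn
    obtain ⟨D2, f2, g1, g2, g3, g4⟩ := hn
    refine ⟨⟨⟨⟨D2, f2⟩, x + 1⟩, g1, (g2.weak subset_union_left).trans ht h2, ?_, by simp; omega⟩,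
      x, rfl, hx'.le, g3 ⟨hx, by simp⟩, fun y hy => g3 ⟨hy.1, ?_⟩, g2, ?_⟩
    · intro y hy
      refine g3 ⟨h3 hy, ?_⟩
      have := hy.2
      simp only [mem_Iio] at this ⊢; omega
    · have := hy.2
      simp only [mem_Iio] at this ⊢; omega
    · rintro ⟨Y, e1, e2⟩
      exact g4 Y e1 e2
  choose nx x t1 t2 t3 t4 t5 t6 using step
  let S : ℕ → St := fun n => nx^[n] ⟨⟨⟨D, f⟩, m⟩, hf, leS_refl _ _ _, inter_subset_left, le_rfl⟩
  have hS : ∀ i, S (i + 1) = nx (S i) := fun i => Function.iterate_succ_apply' _ _ _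
  let DD : ℕ → Set ℕ := fun n => (S n).1.1.1
  let ff : ℕ → Set ℕ → Q := fun n => (S n).1.1.2
  let mm : ℕ → ℕ := fun n => (S n).1.2
  let y : ℕ → ℕ := fun n => x (S n)
  have b1 : ∀ n, mm (n+1) = y n + 1 := fun n => by simp only [mm, y]; rw [hS, t1]
  have b2 : ∀ n, mm n ≤ y n := fun n => t2 _
  have b3 : ∀ n, y n ∈ DD (n+1) := fun n => by simp only [DD, y]; rw [hS]; exact t3 _
  have b4 : ∀ n, DD n ∩ Iio (mm n) ⊆ DD (n+1) := fun n => by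
    have := t4 (S n); rw [← hS] at this; exact this
  have b5 : ∀ n, leS r lt (s ∪ {y n}) (DD (n+1)) (ff (n+1)) (DD n) (ff n) := fun n => by
    have := t5 (S n); rw [← hS] at this; exact this
  have b6 : ∀ n, ¬ ∃ Y, s ∪ {y n} ⊆ Y ∧ Mov r lt (DD (n+1)) (ff (n+1)) Y := fun n => by
    have := t6 (S n); rw [← hS] at this; exact this
  have hmm : StrictMono mm := strictMono_nat_of_lt_succ fun n => by
    have := b1 n; have := b2 n; omega
  have hy : StrictMono y := strictMono_nat_of_lt_succ fun n => by
    have := b1 n; have := b2 (n+1); omega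
  have hle : ∀ n k, n ≤ k → leS r lt s (DD k) (ff k) (DD n) (ff n) := by
    intro n k hk
    induction k, hk using Nat.le_induction with
    | base => exact leS_refl _ _ _
    | succ k _ ih => exact ((b5 k).weak subset_union_left).trans ht ih
  have hyk : ∀ n k, y n ∈ DD k := by
    intro n k
    rcases le_total k (n+1) with h | h
    · exact (hle k (n+1) h).1.1 (b3 n)
    · induction k, h using Nat.le_induction with
      | base => exact b3 n
      | succ k hk ih =>
        refine b4 k ⟨ih, ?_⟩
        have := hmm.monotone hk
        have := b1 n
        simp only [mem_Iio]; omega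
  have hFk : ∀ k, D ∩ Iio m ⊆ DD k := fun k => (S k).2.2.2.1
  let E : Set ℕ := D ∩ Iio m ∪ Set.range y
  have hED : ∀ k, E ⊆ DD k := fun k => union_subset (hFk k) (by rintro _ ⟨n, rfl⟩; exact hyk n k)
  have hEi : E.Infinite := (Set.infinite_range_of_injective hy.injective).mono subset_union_right
  have hEy : ∀ X ⊆ E, X.Infinite → ∃ n, y n ∈ X := by
    intro X hX hXi
    obtain ⟨z, hz, hz'⟩ := hXi.exists_gt m
    rcases hX hz with h | ⟨n, rfl⟩
    · have := h.2; simp only [mem_Iio] at this; omega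
    · exact ⟨n, hz⟩
  have hconst : ∀ n k, n + 1 ≤ k → ∀ X ⊆ E, X.Infinite → y n ∈ X → ff k X = ff (n+1) X := by
    intro n k hk X hX hXi hn
    by_contra hne
    obtain ⟨Y, c1, c2, c3⟩ := (hle (n+1) k hk).2 X (hX.trans (hED k)) hXi hne
    exact b6 n ⟨Y, union_subset c2 (by simpa using c1 hn), c3⟩
  let N : Set ℕ → ℕ := fun X => sInf {n | y n ∈ X} + 1
  let g : Set ℕ → Q := fun X => ff (N X) X
  have hg : ∀ n k, n + 1 ≤ k → ∀ X ⊆ E, X.Infinite → y n ∈ X → g X = ff k X := by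
    intro n k hk X hX hXi hn
    have h1 : y (sInf {n | y n ∈ X}) ∈ X := Nat.sInf_mem (s := {n | y n ∈ X}) ⟨n, hn⟩
    have h2 : sInf {n | y n ∈ X} ≤ n := Nat.sInf_le hn
    exact (hconst _ k (by omega) X hX hXi h1).symm
  have hgb : BadA r E g := by
    refine ⟨hEi, ?_, ?_⟩
    · intro X hX hXi
      obtain ⟨n, hn⟩ := hEy X hX hXi
      obtain ⟨k, hk⟩ := (S (n+1)).2.1.2.1 X (hX.trans (hED _)) hXi
      refine ⟨max k (y n + 1), fun Y hY hYi e => ?_⟩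
      have hnY : y n ∈ Y ∩ Iio (max k (y n + 1)) := by
        rw [e]; exact ⟨hn, by simp⟩
      rw [hg n (n+1) le_rfl Y hY hYi hnY.1, hg n (n+1) le_rfl X hX hXi hn]
      exact hk Y (hY.trans (hED _)) hYi (inter_Iio_mono e (le_max_left _ _))
    · intro X hX hXi
      obtain ⟨n, hn⟩ := hEy (sh X) ((sh_sub X).trans hX) (sh_inf hXi)
      rw [hg n (n+1) le_rfl X hX hXi (sh_sub X hn),
        hg n (n+1) le_rfl (sh X) ((sh_sub X).trans hX) (sh_inf hXi) hn]
      exact (S (n+1)).2.1.2.2 X (hX.trans (hED _)) hXi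
  have hgl : leS r lt s E g D f := by
    refine ⟨⟨hED 0, fun X hX hXi => ?_⟩, fun X hX hXi => ?_⟩
    · obtain ⟨n, hn⟩ := hEy X hX hXi
      rw [hg n (n+1) le_rfl X hX hXi hn]
      exact (hle 0 (n+1) (by omega)).1.2 X (hX.trans (hED _)) hXi
    · obtain ⟨n, hn⟩ := hEy X hX hXi
      rw [hg n (n+1) le_rfl X hX hXi hn]
      exact (hle 0 (n+1) (by omega)).2 X (hX.trans (hED _)) hXi
  obtain ⟨Y, hsY, hYE, h, hh, hlt⟩ := hU E g hgb hgl subset_union_left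
  obtain ⟨n, hn⟩ := hEy Y hYE hh.1
  refine b6 n ⟨Y, union_subset hsY (by simpa using hn), hYE.trans (hED _), h, hh, fun X hX hXi => ?_⟩
  obtain ⟨k, hk⟩ := hEy X (hX.trans hYE) hXi
  have h1 := hlt X hX hXi
  rw [hg k (max (n+1) (k+1)) (le_max_right _ _) X (hX.trans hYE) hXi hk] at h1
  exact lt_le' ht h1 ((hle (n+1) _ (le_max_left _ _)).1.2 X ((hX.trans hYE).trans (hED _)) hXi)

lemma mba_move (ht : ∀ a b c, lt a b → lt b c → lt a c)
    (compat : ∀ a b c, lt a b → r c a → r c b) {D s : Set ℕ} {f : Set ℕ → Q} {m : ℕ}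
    (hf : BadA r D f) (hs : s ⊆ D ∩ Iio m) (hU : UU r lt D f m s) :
    ∃ D' f', BadA r D' f' ∧ leS r lt s D' f' D f ∧ D ∩ Iio m ⊆ D' ∧
      ∀ X ⊆ D', X.Infinite → X ∩ Iio m = s → lt (f' X) (f X) := by
  classical
  obtain ⟨Y, hsY, hYD, h, hh, hlt⟩ := hU D f hf (leS_refl _ _ _) inter_subset_left
  have hmov : Mov r lt D f Y := ⟨hYD, h, hh, hlt⟩
  let E : Set ℕ := D ∩ Iio m ∪ Y \ Iio m
  have hED : E ⊆ D := union_subset inter_subset_left (sdiff_subset.trans hYD)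
  let g : Set ℕ → Q := fun X => if X ∩ Iio m ⊆ s then h X else f X
  have hY : ∀ X ⊆ E, X ∩ Iio m ⊆ s → X ⊆ Y := by
    intro X hX hXs x hx
    rcases hX hx with h | h
    · exact hsY (hXs ⟨hx, h.2⟩)
    · exact h.1
  have hg1 : ∀ X, X ∩ Iio m ⊆ s → g X = h X := fun X hX => if_pos hX
  have hg2 : ∀ X, ¬ X ∩ Iio m ⊆ s → g X = f X := fun X hX => if_neg hX
  refine ⟨E, g, ⟨(inf_diff_Iio hh.1 m).mono subset_union_right, ?_, ?_⟩, ⟨⟨hED, ?_⟩, ?_⟩,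
    subset_union_left, ?_⟩
  · intro X hX hXi
    by_cases hc : X ∩ Iio m ⊆ s
    · obtain ⟨k, hk⟩ := hh.2.1 X (hY X hX hc) hXi
      refine ⟨max k m, fun Z hZ hZi e => ?_⟩
      have hc' : Z ∩ Iio m ⊆ s := by rwa [inter_Iio_mono e (le_max_right _ _)]
      rw [hg1 X hc, hg1 Z hc']
      exact hk Z (hY Z hZ hc') hZi (inter_Iio_mono e (le_max_left _ _))
    · obtain ⟨k, hk⟩ := hf.2.1 X (hX.trans hED) hXi
      refine ⟨max k m, fun Z hZ hZi e => ?_⟩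
      have hc' : ¬ Z ∩ Iio m ⊆ s := by rwa [inter_Iio_mono e (le_max_right _ _)]
      rw [hg2 X hc, hg2 Z hc']
      exact hk Z (hZ.trans hED) hZi (inter_Iio_mono e (le_max_left _ _))
  · intro X hX hXi
    have hX' := (sh_sub X).trans hX
    by_cases hc : X ∩ Iio m ⊆ s
    · have hc' : sh X ∩ Iio m ⊆ s := (inter_subset_inter_left _ (sh_sub X)).trans hc
      rw [hg1 _ hc, hg1 _ hc']
      exact hh.2.2 X (hY X hX hc) hXi
    · rw [hg2 _ hc]
      have h0 := hf.2.2 X (hX.trans hED) hXi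
      by_cases hc' : sh X ∩ Iio m ⊆ s
      · rw [hg1 _ hc']
        exact fun h1 => h0 (compat _ _ _ (hlt _ (hY _ hX' hc') (sh_inf hXi)) h1)
      · rwa [hg2 _ hc']
  · intro X hX hXi
    by_cases hc : X ∩ Iio m ⊆ s
    · rw [hg1 _ hc]; exact Or.inr (hlt _ (hY X hX hc) hXi)
    · rw [hg2 _ hc]; exact Or.inl rfl
  · intro X hX hXi hne
    by_cases hc : X ∩ Iio m ⊆ s
    · exact ⟨Y, hY X hX hc, hsY, hmov⟩
    · exact absurd (hg2 _ hc) hne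
  · intro X hX hXi e
    rw [hg1 _ e.subset]; exact hlt _ (hY X hX e.subset) hXi

/-- Minimal bad array lemma. -/
theorem mba (wf : WellFounded lt) (ht : ∀ a b c, lt a b → lt b c → lt a c)
    (compat : ∀ a b c, lt a b → r c a → r c b)
    {D₀ : Set ℕ} {f₀ : Set ℕ → Q} (hf₀ : BadA r D₀ f₀) :
    ∃ D f, BadA r D f ∧ leA lt D f D₀ f₀ ∧ ∀ Y, ¬ Mov r lt D f Y := by
  by_contra hcon
  have hU0 : UU r lt D₀ f₀ 0 ∅ := by
    intro D f h1 h2 h3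
    by_contra h
    exact hcon ⟨D, f, h1, h2.1, fun Y hY => h ⟨Y, empty_subset _, hY⟩⟩
  let St := {p : ((Set ℕ × (Set ℕ → Q)) × ℕ) × Set ℕ // BadA r p.1.1.1 p.1.1.2 ∧
    p.2 ⊆ p.1.1.1 ∩ Iio p.1.2 ∧ UU r lt p.1.1.1 p.1.1.2 p.1.2 p.2}
  have step : ∀ p : St, ∃ (q : St) (x : ℕ), p.1.1.2 ≤ x ∧ q.1.1.2 = x + 1 ∧ q.1.2 = p.1.2 ∪ {x} ∧
      q.1.1.1.1 ⊆ p.1.1.1.1 ∧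
      ∀ X ⊆ q.1.1.1.1, X.Infinite → X ∩ Iio p.1.1.2 = p.1.2 → lt (q.1.1.1.2 X) (p.1.1.1.2 X) := by
    rintro ⟨⟨⟨⟨D, f⟩, m⟩, s⟩, h1, h2, h3⟩
    simp only at h1 h2 h3
    obtain ⟨D1, f1, g1, g2, g3, g4⟩ := mba_move ht compat h1 h2 h3
    obtain ⟨D2, f2, x, k1, k2, k3, k4, k5, k6⟩ := mba_key ht g1 (h3.down ht g2 g3)
    refine ⟨⟨⟨⟨⟨D2, f2⟩, x+1⟩, s ∪ {x}⟩, k1, ?_, k6⟩, x, k5, rfl, rfl, k2.1.1.trans g2.1.1, ?_⟩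
    · rintro z (hz | rfl)
      · refine ⟨k3 ⟨g3 (h2 hz), (h2 hz).2⟩, ?_⟩
        have := (h2 hz).2
        simp only [mem_Iio] at this ⊢; omega
      · exact ⟨k4, by simp⟩
    · intro X hX hXi e
      have e1 := k2.1.2 X hX hXi
      have e2 := g4 X (hX.trans k2.1.1) hXi e
      rcases e1 with e1 | e1
      · simp only; rw [e1]; exact e2
      · exact ht _ _ _ e1 e2
  choose nx x t1 t2 t3 t4 t5 using step
  let S : ℕ → St := fun n => nx^[n] ⟨⟨⟨⟨D₀, f₀⟩, 0⟩, ∅⟩, hf₀, empty_subset _, hU0⟩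
  have hS : ∀ i, S (i + 1) = nx (S i) := fun i => Function.iterate_succ_apply' _ _ _
  let y : ℕ → ℕ := fun n => x (S n)
  have b1 : ∀ n, (S n).1.1.2 ≤ y n := fun n => t1 _
  have b2 : ∀ n, (S (n+1)).1.1.2 = y n + 1 := fun n => by rw [hS, t2]
  have b3 : ∀ n, (S (n+1)).1.2 = (S n).1.2 ∪ {y n} := fun n => by rw [hS, t3]
  have hy : StrictMono y := strictMono_nat_of_lt_succ fun n => by
    have := b2 n; have := b1 (n+1); omega
  have hSy : ∀ n, (S n).1.2 = y '' Iio n := by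
    intro n
    induction n with
    | zero => simp [S]
    | succ i ih => rw [b3, ih]; ext z; simp; grind
  have hanti : Antitone fun n => (S n).1.1.1.1 := antitone_nat_of_succ_le fun n => by
    rw [hS]; exact t4 _
  have hyD : ∀ n k, y n ∈ (S k).1.1.1.1 := by
    intro n k
    have h1 : y n ∈ (S (max (n+1) k)).1.2 := by
      rw [hSy]; exact ⟨n, by simp, rfl⟩
    exact hanti (le_max_right _ _) ((S (max (n+1) k)).2.2.1 h1).1
  have hX : ∀ k, Set.range y ⊆ (S k).1.1.1.1 := by rintro k _ ⟨n, rfl⟩; exact hyD n k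
  have hXi : (Set.range y).Infinite := Set.infinite_range_of_injective hy.injective
  have hXs : ∀ n, Set.range y ∩ Iio (S n).1.1.2 = (S n).1.2 := by
    intro n
    apply Subset.antisymm
    · rintro _ ⟨⟨k, rfl⟩, hk⟩
      rw [hSy]
      refine ⟨k, ?_, rfl⟩
      have := b1 n
      simp only [mem_Iio] at hk
      exact hy.lt_iff_lt.1 (by omega)
    · intro z hz
      refine ⟨?_, ((S n).2.2.1 hz).2⟩
      rw [hSy] at hz
      obtain ⟨k, -, rfl⟩ := hz
      exact ⟨k, rfl⟩
  have hdesc : ∀ n, lt ((S (n+1)).1.1.1.2 (Set.range y)) ((S n).1.1.1.2 (Set.range y)) := by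
    intro n
    have := t5 (S n)
    rw [← hS] at this
    exact this _ (hX _) hXi (hXs n)
  obtain ⟨_, ⟨n, rfl⟩, hn⟩ := wf.has_min (Set.range fun n => (S n).1.1.1.2 (Set.range y)) ⟨_, 0, rfl⟩
  exact hn _ ⟨n+1, rfl⟩ (hdesc n)
end MBA
end LaverBQO
namespace LaverBQO
open Set
universe u v

/-- Embeddability of transfinite sequences. -/
def SeqLe {A : Type v} (r : A → A → Prop) (a b : Ordinal.{u} × (Ordinal.{u} → A)) : Prop :=
  ∃ φ : Ordinal.{u} → Ordinal.{u}, (∀ i < a.1, φ i < b.1 ∧ r (a.2 i) (b.2 (φ i))) ∧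
    ∀ i j, i < j → j < a.1 → φ i < φ j

/-- Greedy embedding. -/
noncomputable def greedy {A : Type v} (r : A → A → Prop) (s t : Ordinal.{u} → A)
    (i : Ordinal.{u}) : Ordinal.{u} :=
  sInf {j | (∀ i', ∀ _h : i' < i, greedy r s t i' < j) ∧ r (s i) (t j)}
termination_by i

lemma greedy_spec {A : Type v} (r : A → A → Prop) (s t : Ordinal.{u} → A) (γ β : Ordinal.{u})
    (ψ : Ordinal.{u} → Ordinal.{u}) (h1 : ∀ i < γ, ψ i < β ∧ r (s i) (t (ψ i)))
    (h2 : ∀ i j, i < j → j < γ → ψ i < ψ j) (i : Ordinal.{u}) (hi : i < γ) :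
    greedy r s t i ≤ ψ i ∧ r (s i) (t (greedy r s t i)) ∧
      ∀ i' < i, greedy r s t i' < greedy r s t i := by
  induction i using WellFoundedLT.induction with
  | ind i ih =>
    have hm : ψ i ∈ {j | (∀ i', ∀ _h : i' < i, greedy r s t i' < j) ∧ r (s i) (t j)} :=
      ⟨fun i' h => (ih i' h (h.trans hi)).1.trans_lt (h2 i' i h hi), (h1 i hi).2⟩
    have h3 := csInf_mem (⟨_, hm⟩ : Set.Nonempty _)
    rw [← greedy] at h3
    refine ⟨?_, h3.2, fun i' h => h3.1 i' h⟩
    rw [greedy]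
    exact csInf_le' hm

lemma seq_trunc {A : Type v} (r : A → A → Prop) (a b : Ordinal.{u} × (Ordinal.{u} → A))
    (h : ¬ SeqLe r a b) : ∃ i < a.1, ¬ SeqLe r (Order.succ i, a.2) b := by
  by_contra hc
  push Not at hc
  apply h
  refine ⟨greedy r a.2 b.2, ?_, ?_⟩
  · intro i hi
    obtain ⟨ψ, h1, h2⟩ := hc i hi
    have := greedy_spec r a.2 b.2 _ b.1 ψ h1 h2 i (Order.lt_succ i)
    exact ⟨this.1.trans_lt (h1 i (Order.lt_succ i)).1, this.2.1⟩
  · intro i j hij hj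
    obtain ⟨ψ, h1, h2⟩ := hc j hj
    exact (greedy_spec r a.2 b.2 _ b.1 ψ h1 h2 j (Order.lt_succ j)).2.2 i hij

theorem seq_bad {A : Type v} (r : A → A → Prop) {D : Set ℕ}
    {f : Set ℕ → Ordinal.{u} × (Ordinal.{u} → A)} (hf : BadA (SeqLe r) D f) :
    ∃ D' ⊆ D, ∃ g : Set ℕ → A, BadA r D' g ∧
      ∀ X ⊆ D', X.Infinite → ∃ i < (f X).1, g X = (f X).2 i := by
  classical
  let lt : Ordinal.{u} × (Ordinal.{u} → A) → Ordinal.{u} × (Ordinal.{u} → A) → Prop :=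
    fun a b => a.1 < b.1 ∧ a.2 = b.2
  have wf : WellFounded lt :=
    Subrelation.wf (r := InvImage (· < ·) Prod.fst) (fun h => h.1) (InvImage.wf _ wellFounded_lt)
  obtain ⟨D1, f1, hb, hle, hm⟩ := mba (r := SeqLe r) (lt := lt) wf
    (fun a b c h h' => ⟨h.1.trans h'.1, h.2.trans h'.2⟩)
    (by
      rintro a b c ⟨h, h'⟩ ⟨φ, h1, h2⟩
      exact ⟨φ, fun i hi => ⟨(h1 i hi).1.trans h, h' ▸ (h1 i hi).2⟩, h2⟩) hf
  have hG : ∀ c d, ∃ i, ¬ SeqLe r c d → i < c.1 ∧ ¬ SeqLe r (Order.succ i, c.2) d := by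
    intro c d
    by_cases h : SeqLe r c d
    · exact ⟨0, fun h' => absurd h h'⟩
    · obtain ⟨i, h1, h2⟩ := seq_trunc r c d h
      exact ⟨i, fun _ => ⟨h1, h2⟩⟩
  choose Γ hΓ using hG
  let h : Set ℕ → Ordinal.{u} × (Ordinal.{u} → A) := fun X => (Γ (f1 X) (f1 (sh X)), (f1 X).2)
  have hLC : LC D1 h := hb.2.1.comp2 hb.2.1.sh (fun a b => (Γ a b, a.2))
  obtain ⟨Y, hY, hYi, v, hv⟩ := ramsey hb.1
    (hLC.comp2 hLC.sh (fun a b => SeqLe r a b))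
  have hΓ' : ∀ X ⊆ D1, X.Infinite → (h X).1 < (f1 X).1 ∧
      ¬ SeqLe r (Order.succ (h X).1, (f1 X).2) (f1 (sh X)) :=
    fun X hX hXi => hΓ _ _ (hb.2.2 X hX hXi)
  by_cases hvt : v
  · refine ⟨Y, hY.trans hle.1, fun X => (h X).2 (h X).1,
      ⟨hYi, (hLC.mono hY).comp (fun a => a.2 a.1), ?_⟩, ?_⟩
    · intro X hX hXi hr
      have hs : SeqLe r (h X) (h (sh X)) := by rw [hv X hX hXi]; exact hvt
      obtain ⟨φ, h1, h2⟩ := hs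
      have hsX := hΓ' (sh X) ((sh_sub X).trans (hX.trans hY)) (sh_inf hXi)
      apply (hΓ' X (hX.trans hY) hXi).2
      refine ⟨fun i => if i < (h X).1 then φ i else (h (sh X)).1, ?_, ?_⟩
      · intro i hi
        rcases (Order.lt_succ_iff.1 hi).lt_or_eq with hi | hi
        · simp only [hi, if_true]
          exact ⟨(h1 i hi).1.trans hsX.1, (h1 i hi).2⟩
        · subst hi
          simp only [lt_irrefl, if_false]
          exact ⟨hsX.1, hr⟩
      · intro i j hij hj
        have hi : i < (h X).1 := hij.trans_le (Order.lt_succ_iff.1 hj)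
        rcases (Order.lt_succ_iff.1 hj).lt_or_eq with hj | hj
        · simp only [hi, hj, if_true]
          exact h2 i j hij hj
        · simp only [hi, hj, lt_irrefl, if_false, if_true]
          exact (h1 i hi).1
    · intro X hX hXi
      have h1 := hΓ' X (hX.trans hY) hXi
      rcases hle.2 X (hX.trans hY) hXi with he | he
      · exact ⟨(h X).1, he ▸ h1.1, by rw [← he]⟩
      · exact ⟨(h X).1, h1.1.trans he.1, by rw [← he.2]⟩
  · exfalso
    apply hm Y
    refine ⟨hY, h, ⟨hYi, hLC.mono hY, ?_⟩, ?_⟩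
    · intro X hX hXi hs
      have := hv X hX hXi
      exact hvt (this ▸ hs)
    · intro X hX hXi
      exact ⟨(hΓ' X (hX.trans hY) hXi).1, rfl⟩

end LaverBQO
namespace LaverBQO
open Set
universe u

/-- Order according to a sign. -/
def ordB {K : Type u} [LinearOrder K] (b : Bool) (x y : K) : Prop :=
  match b with
  | true => x < y
  | false => y < x

/-- Codes for linear orders. -/
inductive Code : Type (u+1)
  | mk (L : LinOrd.{u}) (I : Type u) (sg : I → Bool) (len : I → Ordinal.{u})
      (inf : I → Ordinal.{u} → Prop) (e : I → Ordinal.{u} → Code) : Code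

/-- `K` is closed under the sum operation given by the label `a`. -/
def ClosedL (K : LinOrd.{u}) (b : Bool) (a : Ordinal.{u} × (Ordinal.{u} → Option LinOrd.{u})) :
    Prop :=
  ∃ φ : ∀ o, o < a.1 → ((a.2 o).getD K → K), (∀ o h, StrictMono (φ o h)) ∧
    ∀ o o' h h', o < o' → ∀ x y, ordB b (φ o h x) (φ o' h' y)

namespace Code

/-- the order -/
def L : Code.{u} → LinOrd.{u} | mk L _ _ _ _ _ => L
/-- labels -/
def I : Code.{u} → Type u | mk _ I _ _ _ _ => I
/-- signs -/
def sg : (c : Code.{u}) → c.I → Bool | mk _ _ s _ _ _ => s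
/-- lengths -/
def len : (c : Code.{u}) → c.I → Ordinal.{u} | mk _ _ _ l _ _ => l
/-- self entries -/
def inf : (c : Code.{u}) → c.I → Ordinal.{u} → Prop | mk _ _ _ _ n _ => n
/-- entries -/
def e : (c : Code.{u}) → c.I → Ordinal.{u} → Code.{u} | mk _ _ _ _ _ e => e

open Classical in
/-- The label as a sequence of orders. -/
noncomputable def lab0 (c : Code.{u}) (i : c.I) :
    Ordinal.{u} × (Ordinal.{u} → Option LinOrd.{u}) :=
  (c.len i, fun o => if c.inf i o then none else some (c.e i o).L)

/-- Local validity. -/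
def V0 (c : Code.{u}) : Prop :=
  (∀ i, ClosedL c.L (c.sg i) (c.lab0 i)) ∧
    ∀ K : LinOrd.{u}, Nonempty K → (∀ i, ClosedL K (c.sg i) (c.lab0 i)) → Nonempty (c.L ↪o K)

/-- Validity. -/
inductive Valid : Code.{u} → Prop
  | mk (c : Code.{u}) (h : V0 c) (h' : ∀ i o, ¬ c.inf i o → Valid (c.e i o)) : Valid c

lemma Valid.v0 {c : Code.{u}} (h : Valid c) : V0 c := by cases h; assumption
lemma Valid.ent {c : Code.{u}} (h : Valid c) : ∀ i o, ¬ c.inf i o → Valid (c.e i o) := by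
  cases h; assumption

end Code

/-- Valid codes. -/
abbrev CQ : Type (u+1) := {c : Code.{u} // c.Valid}

/-- Embeddability. -/
def rQ (c d : CQ.{u}) : Prop := Nonempty (c.1.L ↪o d.1.L)

/-- Subterm relation. -/
def sub (d c : CQ.{u}) : Prop := ∃ i o, o < c.1.len i ∧ ¬ c.1.inf i o ∧ d.1 = c.1.e i o

/-- Extension of a relation to `Option`. -/
def rO {A : Type*} (r : A → A → Prop) : Option A → Option A → Prop
  | none, none => True
  | some a, some b => r a b
  | _, _ => False

lemma sub_wf : WellFounded sub.{u} := by
  have : ∀ c : Code.{u}, ∀ h : c.Valid, Acc sub (⟨c, h⟩ : CQ.{u}) := by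
    intro c
    induction c with
    | mk L I sg len inf e ih =>
      intro h
      constructor
      rintro ⟨d, hd⟩ ⟨i, o, h1, h2, h3⟩
      change d = e i o at h3
      subst h3
      exact ih i o hd
  exact ⟨fun c => this c.1 c.2⟩

lemma sub_emb {d c : CQ.{u}} (h : sub d c) : rQ d c := by
  obtain ⟨i, o, h1, h2, h3⟩ := h
  obtain ⟨φ, h4, -⟩ := c.2.v0.1 i
  have h5 : ∃ g : (((c.1.lab0 i).2 o).getD c.1.L) → c.1.L, StrictMono g := ⟨φ o h1, h4 o h1⟩
  have h6 : (c.1.lab0 i).2 o = some (c.1.e i o).L := by simp [Code.lab0, h2]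
  rw [h6, ← h3] at h5
  obtain ⟨g, hg⟩ := h5
  exact ⟨OrderEmbedding.ofStrictMono g hg⟩

lemma rQ_trans {a b c : CQ.{u}} (h : rQ a b) (h' : rQ b c) : rQ a c :=
  ⟨h.some.trans h'.some⟩

lemma tsub_emb {d c : CQ.{u}} (h : Relation.TransGen sub d c) : rQ d c := by
  induction h with
  | single h => exact sub_emb h
  | tail _ h ih => exact rQ_trans ih (sub_emb h)

open Classical in
/-- The label as a sequence of valid codes. -/
noncomputable def labQ (c : CQ.{u}) (i : c.1.I) : Ordinal.{u} × (Ordinal.{u} → Option CQ.{u}) :=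
  (c.1.len i, fun o => if h : c.1.inf i o then none else some ⟨c.1.e i o, c.2.ent i o h⟩)

/-- order of a code -/
abbrev CL (d : CQ.{u}) : LinOrd.{u} := d.1.L

lemma lab0_eq (c : CQ.{u}) (i : c.1.I) (o : Ordinal.{u}) :
    (c.1.lab0 i).2 o = ((labQ c i).2 o).map CL := by
  by_cases h : c.1.inf i o <;> simp [Code.lab0, labQ, h]

lemma rO_emb {x y : Option CQ.{u}} (h : rO rQ x y) (K : LinOrd.{u}) :
    ∃ g : ((x.map CL).getD K) → ((y.map CL).getD K), StrictMono g := by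
  rcases x with _ | x <;> rcases y with _ | y
  · exact ⟨id, strictMono_id⟩
  · exact h.elim
  · exact h.elim
  · exact ⟨h.some, h.some.strictMono⟩

/-- transfer of closedness, general form -/
lemma closedL_transfer {K : LinOrd.{u}} {b : Bool}
    {a a' : Ordinal.{u} × (Ordinal.{u} → Option LinOrd.{u})}
    (φ : Ordinal.{u} → Ordinal.{u}) (h1 : ∀ i < a.1, φ i < a'.1 ∧
      ∃ g : ((a.2 i).getD K) → ((a'.2 (φ i)).getD K), StrictMono g)
    (h2 : ∀ i j, i < j → j < a.1 → φ i < φ j) (hc : ClosedL K b a') : ClosedL K b a := by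
  obtain ⟨ψ, h3, h4⟩ := hc
  choose h5 g hg using h1
  exact ⟨fun o ho => ψ (φ o) (h5 o ho) ∘ g o ho, fun o ho => (h3 _ _).comp (hg o ho),
    fun o o' h h' hoo x y => h4 _ _ _ _ (h2 o o' hoo h') _ _⟩

lemma closedL_seqLe {K : LinOrd.{u}} {b : Bool} {c d : CQ.{u}} {i : c.1.I} {j : d.1.I}
    (h : SeqLe (rO rQ) (labQ c i) (labQ d j)) (hc : ClosedL K b (d.1.lab0 j)) :
    ClosedL K b (c.1.lab0 i) := by
  obtain ⟨φ, h1, h2⟩ := h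
  refine closedL_transfer φ (fun o ho => ⟨(h1 o ho).1, ?_⟩) h2 hc
  rw [lab0_eq, lab0_eq]
  exact rO_emb (h1 o ho).2 K

theorem bqo {D : Set ℕ} {f : Set ℕ → CQ.{u}} (hf : BadA rQ D f) : False := by
  classical
  obtain ⟨D1, f1, hb, -, hm⟩ := mba (r := rQ) (lt := Relation.TransGen sub.{u}) sub_wf.transGen
    (fun a b c h h' => h.trans h') (fun a b c h h' => rQ_trans h' (tsub_emb h)) hf
  obtain ⟨D2, hD2, hi2, v, hv⟩ := ramsey hb.1 (hb.2.1.comp (fun c => Nonempty c.1.L))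
  have hb2 := hb.mono hD2 hi2
  have hne : ∀ X ⊆ D2, X.Infinite → Nonempty (f1 X).1.L := by
    by_cases hvt : v
    · intro X hX hXi
      rw [hv X hX hXi]; exact hvt
    · exfalso
      have h1 := hv D2 subset_rfl hi2
      have : IsEmpty (f1 D2).1.L := not_nonempty_iff.1 (by rw [h1]; exact hvt)
      exact hb2.2.2 D2 subset_rfl hi2 ⟨OrderEmbedding.ofIsEmpty⟩
  have hG : ∀ c d : CQ.{u}, ∃ (b : Bool) (a : Ordinal.{u} × (Ordinal.{u} → Option CQ.{u})),
      ¬ rQ c d → Nonempty d.1.L → ∃ i, b = c.1.sg i ∧ a = labQ c i ∧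
        ¬ ClosedL d.1.L b (c.1.lab0 i) := by
    intro c d
    by_cases h : ¬ rQ c d ∧ Nonempty d.1.L
    · have : ∃ i, ¬ ClosedL d.1.L (c.1.sg i) (c.1.lab0 i) := by
        by_contra hcon
        push Not at hcon
        exact h.1 (c.2.v0.2 d.1.L h.2 hcon)
      obtain ⟨i, hi⟩ := this
      exact ⟨_, _, fun _ _ => ⟨i, rfl, rfl, hi⟩⟩
    · exact ⟨true, (0, fun _ => none), fun h1 h2 => absurd ⟨h1, h2⟩ h⟩
  choose B A hBA using hG
  have hLB : LC D2 (fun X => B (f1 X) (f1 (sh X))) := hb2.2.1.comp2 hb2.2.1.sh _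
  have hLA : LC D2 (fun X => A (f1 X) (f1 (sh X))) := hb2.2.1.comp2 hb2.2.1.sh _
  obtain ⟨D3, hD3, hi3, w, hw⟩ := ramsey hi2 hLB
  have hspec : ∀ X ⊆ D3, X.Infinite → ∃ i, w = (f1 X).1.sg i ∧
      A (f1 X) (f1 (sh X)) = labQ (f1 X) i ∧ ¬ ClosedL (f1 (sh X)).1.L w ((f1 X).1.lab0 i) := by
    intro X hX hXi
    have := hBA (f1 X) (f1 (sh X)) (hb2.2.2 X (hX.trans hD3) hXi)
      (hne _ ((sh_sub X).trans (hX.trans hD3)) (sh_inf hXi))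
    rwa [hw X hX hXi] at this
  have hbad : BadA (SeqLe (rO rQ)) D3 (fun X => A (f1 X) (f1 (sh X))) := by
    refine ⟨hi3, hLA.mono hD3, ?_⟩
    intro X hX hXi hs
    obtain ⟨i, h1, h2, h3⟩ := hspec X hX hXi
    obtain ⟨j, h4, h5, -⟩ := hspec (sh X) ((sh_sub X).trans hX) (sh_inf hXi)
    simp only [h2, h5] at hs
    apply h3
    apply closedL_seqLe hs
    rw [h4]
    exact (f1 (sh X)).2.v0.1 j
  obtain ⟨D4, hD4, g, hg, hgA⟩ := seq_bad _ hbad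
  obtain ⟨D5, hD5, hi5, z, hz⟩ := ramsey hg.1 (hg.2.1.comp (fun c => c = none))
  by_cases hzt : z
  · have h1 : g D5 = none := by rw [hz D5 subset_rfl hi5]; exact hzt
    have h2 : g (sh D5) = none := by rw [hz _ (sh_sub _) (sh_inf hi5)]; exact hzt
    apply hg.2.2 D5 hD5 hi5
    rw [h1, h2]; trivial
  · have hsome : ∀ X ⊆ D5, X.Infinite → ∃ c, g X = some c := by
      intro X hX hXi
      apply Option.ne_none_iff_exists'.1
      intro h
      have := hz X hX hXi
      exact hzt (this ▸ h)
    apply hm D5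
    refine ⟨hD5.trans (hD4.trans (hD3.trans hD2)), fun X => (g X).getD (f1 D1),
      ⟨hi5, (hg.2.1.mono hD5).comp (fun c => c.getD (f1 D1)), ?_⟩, ?_⟩
    · intro X hX hXi hr
      obtain ⟨c, hc⟩ := hsome X hX hXi
      obtain ⟨d, hd⟩ := hsome (sh X) ((sh_sub X).trans hX) (sh_inf hXi)
      apply hg.2.2 X (hX.trans hD5) hXi
      simp only [hc, hd, Option.getD_some] at hr ⊢
      exact hr
    · intro X hX hXi
      obtain ⟨c, hc⟩ := hsome X hX hXi
      obtain ⟨o, ho, h1⟩ := hgA X (hX.trans hD5) hXi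
      obtain ⟨i, -, h2, -⟩ := hspec X (hX.trans (hD5.trans hD4)) hXi
      simp only [hc, h2, Option.getD_some] at h1 ho ⊢
      apply Relation.TransGen.single
      by_cases hin : (f1 X).1.inf i o
      · simp [labQ, hin] at h1
      · simp only [labQ, hin, dite_false, Option.some.injEq] at h1
        exact ⟨i, o, ho, hin, by rw [h1]⟩

end LaverBQO
namespace LaverBQO
open Set
universe u

/-- Monotone or antitone on `P` according to sign. -/
def Mon {L : Type u} [LinearOrder L] (b : Bool) (p : L → Ordinal.{u}) (P : Set L) : Prop :=
  ∀ x ∈ P, ∀ y ∈ P, x ≤ y → (b = true → p x ≤ p y) ∧ (b = false → p y ≤ p x)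

/-- Ranked decomposability relative to `A`. -/
inductive DecR {L : Type u} [LinearOrder L] (A : Set L) : Ordinal.{u+1} → Set L → Prop
  | base (o : Ordinal.{u+1}) (P : Set L) (h : P.Subsingleton ∨ P ∩ A = ∅) : DecR A o P
  | split (o : Ordinal.{u+1}) (P : Set L) (b : Bool) (p : L → Ordinal.{u}) (hM : Mon b p P)
      (r : Ordinal.{u} → Ordinal.{u+1}) (hr : ∀ i, r i < o)
      (h : ∀ i, DecR A (r i) (P ∩ {y | p y = i})) : DecR A o P

/-- Decomposability. -/
def Dec {L : Type u} [LinearOrder L] (A : Set L) (P : Set L) : Prop := ∃ o, DecR A o P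

variable {L : Type u} [LinearOrder L] {A : Set L}

lemma DecR.mono {o : Ordinal.{u+1}} {P P' : Set L} (h : DecR A o P) (hP : P' ⊆ P) :
    DecR A o P' := by
  induction h generalizing P' with
  | base o P h =>
    apply DecR.base
    rcases h with h | h
    · exact Or.inl (h.anti hP)
    · right
      apply subset_empty_iff.1
      rw [← h]
      exact inter_subset_inter_left _ hP
  | split o P b p hM r hr h ih =>
    exact DecR.split o P' b p (fun x hx y hy => hM x (hP hx) y (hP hy)) r hr
      (fun i => ih i (inter_subset_inter_left _ hP))

lemma Dec.mono {P P' : Set L} (h : Dec A P) (hP : P' ⊆ P) : Dec A P' :=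
  ⟨h.choose, h.choose_spec.mono hP⟩

lemma Dec.split {P : Set L} (b : Bool) (p : L → Ordinal.{u}) (hM : Mon b p P)
    (h : ∀ i, Dec A (P ∩ {y | p y = i})) : Dec A P := by
  choose r hr using h
  exact ⟨Order.succ (⨆ i, r i), DecR.split _ P b p hM r
    (fun i => Order.lt_succ_iff.2 (Ordinal.le_iSup r i)) hr⟩

lemma Dec.two {P S : Set L} (hS : IsUpperSet S) (h1 : Dec A (P ∩ S)) (h2 : Dec A (P ∩ Sᶜ)) :
    Dec A P := by
  classical
  refine Dec.split true (fun x => if x ∈ S then 1 else 0) ?_ ?_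
  · intro x _ y _ hxy
    refine ⟨fun _ => ?_, fun h => by simp at h⟩
    by_cases hx : x ∈ S
    · simp [hx, hS hxy hx]
    · simp [hx]
  · intro i
    by_cases hi : i = 1
    · refine h1.mono ?_
      rintro x ⟨hx, hx'⟩
      refine ⟨hx, ?_⟩
      by_contra hxS
      simp [hxS, hi] at hx'
    · refine h2.mono ?_
      rintro x ⟨hx, hx'⟩
      refine ⟨hx, ?_⟩
      intro hxS
      simp [hxS] at hx'
      exact hi hx'.symm

lemma Dec.toIic {P : Set L} {a : L} (h : Dec A (P ∩ Iio a)) : Dec A (P ∩ Iic a) := by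
  refine Dec.two (isUpperSet_Ici a) ?_ (h.mono ?_)
  · exact ⟨0, DecR.base _ _ (Or.inl (fun x hx y hy =>
      (le_antisymm hx.1.2 hx.2).trans (le_antisymm hy.1.2 hy.2).symm))⟩
  · exact fun x hx => ⟨hx.1.1, not_le.1 hx.2⟩

lemma Dec.toIci {P : Set L} {a : L} (h : Dec A (P ∩ Ioi a)) : Dec A (P ∩ Ici a) := by
  refine Dec.two (isUpperSet_Ioi a) (h.mono ?_) ?_
  · exact fun x hx => ⟨hx.1.1, hx.2⟩
  · exact ⟨0, DecR.base _ _ (Or.inl (fun x hx y hy =>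
      (le_antisymm (not_lt.1 hx.2) hx.1.2).trans (le_antisymm (not_lt.1 hy.2) hy.1.2).symm))⟩

lemma exists_rank (L : Type u) : ∃ rk : L → Ordinal.{u}, Function.Injective rk := by
  classical
  exact ⟨Ordinal.typein (WellOrderingRel (α := L)), Ordinal.typein_injective _⟩

lemma Dec.below {P B : Set L} (hB : ∀ b ∈ B, Dec A (P ∩ Iic b)) :
    Dec A (P ∩ {x | ∃ b ∈ B, x ≤ b}) := by
  obtain ⟨rk, hrk⟩ := exists_rank L
  refine Dec.split true (fun x => sInf (rk '' {b | b ∈ B ∧ x ≤ b})) ?_ ?_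
  · rintro x - y ⟨-, b, hb, hyb⟩ hxy
    refine ⟨fun _ => ?_, fun h => by simp at h⟩
    exact csInf_le_csInf' ⟨_, b, ⟨hb, hyb⟩, rfl⟩
      (image_mono fun c hc => ⟨hc.1, hxy.trans hc.2⟩)
  · intro i
    by_cases hi : ∃ b ∈ B, rk b = i
    · obtain ⟨b, hb, rfl⟩ := hi
      refine (hB b hb).mono ?_
      rintro x ⟨⟨hx, c, hc, hxc⟩, hx'⟩
      obtain ⟨d, hd, hd'⟩ := csInf_mem (⟨_, c, ⟨hc, hxc⟩, rfl⟩ : (rk '' {b | b ∈ B ∧ x ≤ b}).Nonempty)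
      have : d = b := hrk (hd'.trans hx')
      exact ⟨hx, this ▸ hd.2⟩
    · refine ⟨0, DecR.base _ _ (Or.inr ?_)⟩
      apply eq_empty_of_forall_notMem
      rintro x ⟨⟨⟨hx, c, hc, hxc⟩, hx'⟩, -⟩
      obtain ⟨d, hd, hd'⟩ := csInf_mem (⟨_, c, ⟨hc, hxc⟩, rfl⟩ : (rk '' {b | b ∈ B ∧ x ≤ b}).Nonempty)
      exact hi ⟨d, hd.1, hd'.trans hx'⟩

lemma Dec.above {P B : Set L} (hB : ∀ b ∈ B, Dec A (P ∩ Ici b)) :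
    Dec A (P ∩ {x | ∃ b ∈ B, b ≤ x}) := by
  obtain ⟨rk, hrk⟩ := exists_rank L
  refine Dec.split false (fun x => sInf (rk '' {b | b ∈ B ∧ b ≤ x})) ?_ ?_
  · rintro x ⟨-, b, hb, hyb⟩ y - hxy
    refine ⟨fun h => by simp at h, fun _ => ?_⟩
    exact csInf_le_csInf' ⟨_, b, ⟨hb, hyb⟩, rfl⟩
      (image_mono fun c hc => ⟨hc.1, hc.2.trans hxy⟩)
  · intro i
    by_cases hi : ∃ b ∈ B, rk b = i
    · obtain ⟨b, hb, rfl⟩ := hi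
      refine (hB b hb).mono ?_
      rintro x ⟨⟨hx, c, hc, hxc⟩, hx'⟩
      obtain ⟨d, hd, hd'⟩ := csInf_mem (⟨_, c, ⟨hc, hxc⟩, rfl⟩ : (rk '' {b | b ∈ B ∧ b ≤ x}).Nonempty)
      have : d = b := hrk (hd'.trans hx')
      exact ⟨hx, this ▸ hd.2⟩
    · refine ⟨0, DecR.base _ _ (Or.inr ?_)⟩
      apply eq_empty_of_forall_notMem
      rintro x ⟨⟨⟨hx, c, hc, hxc⟩, hx'⟩, -⟩
      obtain ⟨d, hd, hd'⟩ := csInf_mem (⟨_, c, ⟨hc, hxc⟩, rfl⟩ : (rk '' {b | b ∈ B ∧ b ≤ x}).Nonempty)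
      exact hi ⟨d, hd.1, hd'.trans hx'⟩

lemma Dec.key {P : Set L} (h : ¬ Dec A P) :
    ∃ a ∈ P ∩ A, ¬ Dec A (P ∩ Iio a) ∧ ¬ Dec A (P ∩ Ioi a) := by
  by_contra hc
  push Not at hc
  apply h
  let B : Set L := {a | Dec A (P ∩ Iic a)}
  let C : Set L := {a | Dec A (P ∩ Ici a)}
  have hB := Dec.below (A := A) (P := P) (B := B) (fun b hb => hb)
  have hC := Dec.above (A := A) (P := P) (B := C) (fun b hb => hb)
  refine Dec.two (S := {x | ∃ b ∈ C, b ≤ x}) ?_ hC ?_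
  · rintro x y hxy ⟨b, hb, hbx⟩
    exact ⟨b, hb, hbx.trans hxy⟩
  · refine Dec.two (S := {x | ∃ b ∈ B, x ≤ b}ᶜ) ?_ ?_ (hB.mono ?_)
    · rintro x y hxy hx ⟨b, hb, hbx⟩
      exact hx ⟨b, hb, hxy.trans hbx⟩
    · refine ⟨0, DecR.base _ _ (Or.inr ?_)⟩
      apply eq_empty_of_forall_notMem
      rintro x ⟨⟨⟨hx, hxC⟩, hxB⟩, hxA⟩
      have hb : ¬ Dec A (P ∩ Iio x) := fun hd => hxB ⟨x, hd.toIic, le_rfl⟩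
      exact hxC ⟨x, (hc x ⟨hx, hxA⟩ hb).toIci, le_rfl⟩
    · rintro x ⟨⟨hx, -⟩, hx'⟩
      exact ⟨hx, not_not.1 hx'⟩

theorem Dec.all (hA : IsEmpty (ℚ ↪o A)) (P : Set L) : Dec A P := by
  by_contra hP
  let r : A → A → Prop := fun x y => x < y ∧ ¬ Dec A (P ∩ Ioo x.1 y.1)
  have hdense : ∀ x y, r x y → ∃ z, r x z ∧ r z y := by
    rintro x y ⟨hxy, hd⟩
    obtain ⟨a, ⟨⟨haP, hxa, hay⟩, haA⟩, h1, h2⟩ := Dec.key hd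
    refine ⟨⟨a, haA⟩, ⟨hxa, fun h => h1 (h.mono ?_)⟩, ⟨hay, fun h => h2 (h.mono ?_)⟩⟩
    · rintro z ⟨⟨hz, hxz, -⟩, hza⟩
      exact ⟨hz, hxz, hza⟩
    · rintro z ⟨⟨hz, -, hzy⟩, hza⟩
      exact ⟨hz, hza, hzy⟩
  have htrans : ∀ x y z, r x y → r y z → r x z := fun x y z h h' =>
    ⟨h.1.trans h'.1, fun hd => h.2 (hd.mono fun w hw => ⟨hw.1, hw.2.1, hw.2.2.trans h'.1⟩)⟩
  have hpair : ∃ x y, r x y := by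
    obtain ⟨a, ⟨-, haA⟩, h1, -⟩ := Dec.key hP
    obtain ⟨b, ⟨⟨-, hba⟩, hbA⟩, -, h2⟩ := Dec.key h1
    exact ⟨⟨b, hbA⟩, ⟨a, haA⟩, hba, fun h => h2 (h.mono fun z hz => ⟨hz.1.1, hz.2, hz.1.2⟩)⟩
  obtain ⟨x, y, hxy⟩ := hpair
  have hch : IsChain r {x, y} := by
    intro a ha b hb hab
    rcases ha with rfl | ha <;> rcases hb with rfl | hb
    · exact absurd rfl hab
    · rw [mem_singleton_iff] at hb; subst hb; exact Or.inl hxy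
    · rw [mem_singleton_iff] at ha; subst ha; exact Or.inr hxy
    · rw [mem_singleton_iff] at ha hb; exact absurd (ha.trans hb.symm) hab
  obtain ⟨E, hE, hsub⟩ := hch.exists_maxChain
  have hlt : ∀ a ∈ E, ∀ b ∈ E, a < b → r a b := by
    intro a ha b hb hab
    rcases hE.1 ha hb hab.ne with h | h
    · exact h
    · exact absurd h.1 hab.not_gt
  have : DenselyOrdered E := by
    constructor
    rintro ⟨a, ha⟩ ⟨b, hb⟩ hab
    obtain ⟨z, h1, h2⟩ := hdense a b (hlt a ha b hb hab)
    by_contra hcon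
    push Not at hcon
    have hch' : IsChain r (insert z E) := by
      apply hE.1.insert
      intro e he _
      rcases lt_trichotomy e a with h | h | h
      · exact Or.inr (htrans _ _ _ (hlt e he a ha h) h1)
      · subst h; exact Or.inr h1
      · have := hcon ⟨e, he⟩ h
        rcases lt_or_eq_of_le (show b ≤ e from this) with h | h
        · exact Or.inl (htrans _ _ _ h2 (hlt b hb e he h))
        · subst h; exact Or.inl h2
    have hz : z ∈ E := by
      rw [hE.2 hch' (subset_insert _ _)]
      exact mem_insert _ _
    exact absurd h2.1 (hcon ⟨z, hz⟩ h1.1).not_gt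
  have : Nontrivial E := ⟨⟨⟨x, hsub (by simp)⟩, ⟨y, hsub (by simp)⟩, by
    intro h; exact hxy.1.ne (congrArg Subtype.val h)⟩⟩
  obtain ⟨g⟩ := Order.embedding_from_countable_to_dense ℚ E
  exact hA.false (g.trans (OrderEmbedding.subtype _))

theorem hausdorff (A : ℕ → Set L) (hU : (⋃ n, A n) = univ) (hA : ∀ n, IsEmpty (ℚ ↪o A n)) :
    ∃ (sg : Set L → Bool) (p : Set L → L → Ordinal.{u}), (∀ P, Mon (sg P) (p P) P) ∧
      ∀ P, ∀ x ∈ P, ∃ k, ((fun Q => Q ∩ {y | p Q y = p Q x})^[k] P).Subsingleton := by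
  classical
  let nn : Set L → ℕ := fun P => sInf {n | (P ∩ A n).Nonempty}
  have hnn : ∀ P x N, x ∈ P → x ∈ A N → (P ∩ A (nn P)).Nonempty ∧ nn P ≤ N := by
    intro P x N hx hN
    have hm : N ∈ {n | (P ∩ A n).Nonempty} := ⟨x, hx, hN⟩
    exact ⟨Nat.sInf_mem ⟨N, hm⟩, Nat.sInf_le hm⟩
  let rk : ℕ → Set L → Ordinal.{u+1} := fun n P => sInf {o | DecR (A n) o P}
  have hrk : ∀ n P, DecR (A n) (rk n P) P := fun n P => csInf_mem (Dec.all (hA n) P)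
  have hS : ∀ P : Set L, ∃ (b : Bool) (p : L → Ordinal.{u}), Mon b p P ∧ (¬ P.Subsingleton →
      ∀ i, rk (nn P) (P ∩ {y | p y = i}) < rk (nn P) P) := by
    intro P
    by_cases hP : P.Subsingleton
    · refine ⟨true, fun _ => 0, ?_, fun h => absurd hP h⟩
      intro x _ y _ _
      simp
    · obtain ⟨x, hx⟩ : P.Nonempty := by
        by_contra hne
        rw [not_nonempty_iff_eq_empty] at hne
        exact hP (hne ▸ subsingleton_empty)
      obtain ⟨N, hN⟩ := mem_iUnion.1 (hU ▸ mem_univ x)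
      have h1 := (hnn P x N hx hN).1
      have h2 := hrk (nn P) P
      generalize hro : rk (nn P) P = o at h2
      cases h2 with
      | base _ _ h =>
        rcases h with h | h
        · exact absurd h hP
        · exact absurd h h1.ne_empty
      | split _ _ b p hM r hr h =>
        exact ⟨b, p, hM, fun _ i => lt_of_le_of_lt (csInf_le' (show r i ∈ {o | DecR (A (nn P)) o (P ∩ {y | p y = i})} from h i)) (hr i)⟩
  choose sg p hM hlt using hS
  refine ⟨sg, p, hM, ?_⟩
  intro P x hx
  obtain ⟨N, hN⟩ := mem_iUnion.1 (hU ▸ mem_univ x)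
  have main : ∀ (m : ℕ) (o : Ordinal.{u+1}) (P : Set L), x ∈ P → N - nn P = m → rk (nn P) P = o →
      ∃ k, ((fun Q => Q ∩ {y | p Q y = p Q x})^[k] P).Subsingleton := by
    intro m
    induction m using Nat.strong_induction_on with
    | _ m ihm =>
    intro o
    induction o using WellFoundedLT.induction with
    | ind o iho =>
    intro P hx hm ho
    by_cases hP : P.Subsingleton
    · exact ⟨0, hP⟩
    let P' := P ∩ {y | p P y = p P x}
    have hx' : x ∈ P' := ⟨hx, rfl⟩
    have h1 := hnn P x N hx hN
    have h2 := hnn P' x N hx' hN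
    have h3 : nn P ≤ nn P' := Nat.sInf_le (h2.1.mono (inter_subset_inter_left _ inter_subset_left))
    have : ∃ k, ((fun Q => Q ∩ {y | p Q y = p Q x})^[k] P').Subsingleton := by
      rcases h3.lt_or_eq with h4 | h4
      · exact ihm (N - nn P') (by omega) _ P' hx' rfl rfl
      · refine iho (rk (nn P') P') ?_ P' hx' (by omega) rfl
        rw [← h4, ← ho]
        exact hlt P hP _
    obtain ⟨k, hk⟩ := this
    exact ⟨k+1, hk⟩
  exact main _ _ P hx rfl rfl

end LaverBQO
namespace LaverBQO
open Set
universe u v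

/-- Fibers. -/
def fib {L : Type u} (p : Set L → L → Ordinal.{u}) (P : Set L) (o : Ordinal.{u}) : Set L :=
  P ∩ {y | p P y = o}

open Classical in
/-- Recursive embedding. -/
noncomputable def Phi {L : Type u} {K : Type u} {J : Type v} (p : Set L → L → Ordinal.{u})
    (Hp : Set L → Prop) (u : Set L → J → Ordinal.{u} → L → K) (jj : Set L → J → Ordinal.{u} → J)
    (e : Set L → J → Ordinal.{u} → K → K) (d : J → K) : ℕ → Set L → J → L → K
  | 0, _, j, _ => d j
  | n+1, P, j, x => if Hp (fib p P (p P x)) then u P j (p P x) x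
      else e P j (p P x) (Phi p Hp u jj e d n (fib p P (p P x)) (jj P j (p P x)) x)

theorem rec_emb {L : Type u} [LinearOrder L] {K : Type u} [LinearOrder K] {J : Type v}
    (sg : Set L → Bool) (p : Set L → L → Ordinal.{u}) (hM : ∀ P, Mon (sg P) (p P) P)
    (Hp : Set L → Prop)
    (hterm : ∀ P, ∀ x ∈ P, ∃ k, Hp ((fun Q => fib p Q (p Q x))^[k] P))
    (lam : Ordinal.{u}) (hlam : ∀ P x, p P x < lam)
    (V : Set (Set L)) (hV1 : ∀ P ∈ V, ¬ Hp P) (hV2 : ∀ P ∈ V, ∀ o, ¬ Hp (fib p P o) → fib p P o ∈ V)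
    (M : J → Set K) (hne : ∀ j, (M j).Nonempty)
    (hyp : ∀ P ∈ V, ∀ j, ∃ T : Ordinal.{u} → Set K, (∀ o < lam, T o ⊆ M j) ∧
      (∀ o o', o < o' → o' < lam → ∀ x ∈ T o, ∀ y ∈ T o', ordB (sg P) x y) ∧
      ∀ o < lam, (Hp (fib p P o) → ∃ u : L → K, StrictMonoOn u (fib p P o) ∧
          MapsTo u (fib p P o) (T o)) ∧
        (¬ Hp (fib p P o) → ∃ j', ∃ e : K → K, StrictMonoOn e (M j') ∧ MapsTo e (M j') (T o)))
    (P : Set L) (hP : P ∈ V) (j : J) : ∃ g : P → M j, StrictMono g := by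
  classical
  choose d hd using hne
  have hyp' : ∀ P j, ∃ T : Ordinal.{u} → Set K, ∀ o, ∃ (u : L → K) (j' : J) (e : K → K),
      P ∈ V → o < lam → T o ⊆ M j ∧
      (∀ o', o < o' → o' < lam → ∀ x ∈ T o, ∀ y ∈ T o', ordB (sg P) x y) ∧
      (Hp (fib p P o) → StrictMonoOn u (fib p P o) ∧ MapsTo u (fib p P o) (T o)) ∧
      (¬ Hp (fib p P o) → StrictMonoOn e (M j') ∧ MapsTo e (M j') (T o)) := by
    intro P j
    by_cases hP : P ∈ V
    · obtain ⟨T, h1, h2, h3⟩ := hyp P hP j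
      refine ⟨T, fun o => ?_⟩
      by_cases ho : o < lam
      · by_cases hH : Hp (fib p P o)
        · obtain ⟨u, hu⟩ := (h3 o ho).1 hH
          exact ⟨u, j, id, fun _ _ => ⟨h1 o ho, fun o' h h' => h2 o o' h h', fun _ => hu,
            fun h => absurd hH h⟩⟩
        · obtain ⟨j', e, he⟩ := (h3 o ho).2 hH
          exact ⟨fun _ => d j, j', e, fun _ _ => ⟨h1 o ho, fun o' h h' => h2 o o' h h',
            fun h => absurd h hH, fun _ => he⟩⟩
      · exact ⟨fun _ => d j, j, id, fun _ h => absurd h ho⟩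
    · exact ⟨fun _ => ∅, fun o => ⟨fun _ => d j, j, id, fun h => absurd h hP⟩⟩
  choose T u jj e hs using hyp'
  let Φ := Phi p Hp u jj e d
  let F : L → Set L → Set L := fun x Q => fib p Q (p Q x)
  let R : ℕ → Set L → L → Prop := fun n P x => ∃ k ≤ n, Hp ((F x)^[k] P)
  have hR : ∀ n P x, P ∈ V → R (n+1) P x → R n (F x P) x := by
    rintro n P x hP ⟨k, hk, hk'⟩
    cases k with
    | zero => exact absurd hk' (hV1 P hP)
    | succ k => exact ⟨k, by omega, hk'⟩
  have hR0 : ∀ P x, P ∈ V → ¬ R 0 P x := by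
    rintro P x hP ⟨k, hk, hk'⟩
    obtain rfl : k = 0 := by omega
    exact hV1 P hP hk'
  have hΦs : ∀ n P j x, Φ (n+1) P j x = if Hp (F x P) then u P j (p P x) x
      else e P j (p P x) (Φ n (F x P) (jj P j (p P x)) x) := fun n P j x => rfl
  have hmem : ∀ n P j x, P ∈ V → x ∈ P → Φ n P j x ∈ M j ∧
      (0 < n → Φ n P j x ∈ T P j (p P x)) := by
    intro n
    induction n with
    | zero => exact fun P j x _ _ => ⟨hd j, fun h => absurd h (lt_irrefl _)⟩
    | succ n ih =>
      intro P j x hP hx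
      obtain ⟨h1, -, h3, h4⟩ := hs P j (p P x) hP (hlam P x)
      suffices Φ (n+1) P j x ∈ T P j (p P x) from ⟨h1 this, fun _ => this⟩
      rw [hΦs]
      by_cases hH : Hp (F x P)
      · rw [if_pos hH]
        exact (h3 hH).2 ⟨hx, rfl⟩
      · rw [if_neg hH]
        exact (h4 hH).2 (ih (F x P) _ x (hV2 P hP _ hH) ⟨hx, rfl⟩).1
  have hstab : ∀ n m P j x, P ∈ V → x ∈ P → R n P x → n ≤ m → Φ m P j x = Φ n P j x := by
    intro n
    induction n with
    | zero => exact fun m P j x hP _ h => absurd h (hR0 P x hP)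
    | succ n ih =>
      intro m P j x hP hx hr hm
      obtain ⟨m, rfl⟩ : ∃ m', m = m' + 1 := ⟨m - 1, by omega⟩
      rw [hΦs, hΦs]
      by_cases hH : Hp (F x P)
      · rw [if_pos hH, if_pos hH]
      · rw [if_neg hH, if_neg hH]
        rw [ih m (F x P) _ x (hV2 P hP _ hH) ⟨hx, rfl⟩ (hR n P x hP hr) (by omega)]
  have hlt : ∀ n P j x y, P ∈ V → x ∈ P → y ∈ P → R n P x → R n P y → x < y →
      Φ n P j x < Φ n P j y := by
    intro n
    induction n with
    | zero => exact fun P j x y hP _ _ h => absurd h (hR0 P x hP)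
    | succ n ih =>
      intro P j x y hP hx hy hrx hry hxy
      by_cases hpe : p P x = p P y
      · obtain ⟨h1, -, h3, h4⟩ := hs P j (p P x) hP (hlam P x)
        have hF : F y P = F x P := by simp only [F, hpe]
        have hrx' := hR n P x hP hrx
        have hry' := hR n P y hP hry
        rw [hF] at hry'
        have hyF : y ∈ F x P := ⟨hy, hpe.symm⟩
        rw [hΦs, hΦs, hF, ← hpe]
        by_cases hH : Hp (F x P)
        · rw [if_pos hH, if_pos hH]
          exact (h3 hH).1 ⟨hx, rfl⟩ hyF hxy
        · rw [if_neg hH, if_neg hH]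
          have hFV := hV2 P hP _ hH
          exact (h4 hH).1 (hmem n _ _ x hFV ⟨hx, rfl⟩).1 (hmem n _ _ y hFV hyF).1
            (ih (F x P) _ x y hFV ⟨hx, rfl⟩ hyF hrx' hry' hxy)
      · have hx' := (hmem (n+1) P j x hP hx).2 (Nat.succ_pos n)
        have hy' := (hmem (n+1) P j y hP hy).2 (Nat.succ_pos n)
        have hm := hM P x hx y hy hxy.le
        cases hb : sg P with
        | true =>
          have := (hs P j (p P x) hP (hlam P x)).2.1 (p P y)
            (lt_of_le_of_ne (hm.1 hb) hpe) (hlam P y) _ hx' _ hy'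
          rw [hb] at this
          exact this
        | false =>
          have := (hs P j (p P y) hP (hlam P y)).2.1 (p P x)
            (lt_of_le_of_ne (hm.2 hb) (Ne.symm hpe)) (hlam P x) _ hy' _ hx'
          rw [hb] at this
          exact this
  have hk : ∀ x : P, ∃ k, R k P x := fun x => by
    obtain ⟨k, hk⟩ := hterm P x x.2
    exact ⟨k, k, le_rfl, hk⟩
  choose k hk using hk
  have hRm : ∀ n m x, n ≤ m → R n P x → R m P x := by
    rintro n m x hnm ⟨k, h1, h2⟩
    exact ⟨k, h1.trans hnm, h2⟩
  refine ⟨fun x => ⟨Φ (k x) P j x, (hmem _ P j x hP x.2).1⟩, ?_⟩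
  intro x y hxy
  change Φ (k x) P j x < Φ (k y) P j y
  rw [← hstab (k x) (max (k x) (k y)) P j x hP x.2 (hk x) (le_max_left _ _),
    ← hstab (k y) (max (k x) (k y)) P j y hP y.2 (hk y) (le_max_right _ _)]
  exact hlt _ P j x y hP x.2 y.2 (hRm _ _ _ (le_max_left _ _) (hk x))
    (hRm _ _ _ (le_max_right _ _) (hk y)) hxy

end LaverBQO
namespace LaverBQO
open Set
universe u

lemma lc_sInf : LC univ (fun X : Set ℕ => sInf X) := by
  intro X _ hX
  refine ⟨sInf X + 1, fun Y _ hY h => ?_⟩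
  have h1 : sInf X ∈ Y := by
    have : sInf X ∈ X ∩ Iio (sInf X + 1) := ⟨Nat.sInf_mem hX.nonempty, Nat.lt_succ_self _⟩
    rw [← h] at this
    exact this.1
  have h2 : sInf Y ≤ sInf X := Nat.sInf_le h1
  have h3 : sInf Y ∈ X := by
    have : sInf Y ∈ Y ∩ Iio (sInf X + 1) := ⟨Nat.sInf_mem hY.nonempty, Nat.lt_succ_of_le h2⟩
    rw [h] at this
    exact this.1
  exact le_antisymm h2 (Nat.sInf_le h3)

lemma sInf_lt_sh {X : Set ℕ} (hX : X.Infinite) : sInf X < sInf (sh X) := by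
  have h := Nat.sInf_mem (sh_inf hX).nonempty
  exact lt_of_le_of_ne (Nat.sInf_le h.1) (fun h' => h.2 h'.symm)

theorem bqoO {D : Set ℕ} {g : Set ℕ → Option CQ.{u}} (hg : BadA (rO rQ) D g) : False := by
  obtain ⟨D5, hD5, hi5, z, hz⟩ := ramsey hg.1 (hg.2.1.comp (fun c => c = none))
  by_cases hzt : z
  · have h1 : g D5 = none := by rw [hz D5 subset_rfl hi5]; exact hzt
    have h2 : g (sh D5) = none := by rw [hz _ (sh_sub _) (sh_inf hi5)]; exact hzt
    apply hg.2.2 D5 hD5 hi5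
    rw [h1, h2]; trivial
  · have hsome : ∀ X ⊆ D5, X.Infinite → ∃ c, g X = some c := by
      intro X hX hXi
      apply Option.ne_none_iff_exists'.1
      intro h
      have := hz X hX hXi
      exact hzt (this ▸ h)
    obtain ⟨c0, -⟩ := hsome D5 subset_rfl hi5
    apply bqo (D := D5) (f := fun X => (g X).getD c0)
    refine ⟨hi5, (hg.2.1.mono hD5).comp (fun c => c.getD c0), ?_⟩
    intro X hX hXi hr
    obtain ⟨c, hc⟩ := hsome X hX hXi
    obtain ⟨d, hd⟩ := hsome (sh X) ((sh_sub X).trans hX) (sh_inf hXi)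
    apply hg.2.2 X (hX.trans hD5) hXi
    simp only [hc, hd, Option.getD_some] at hr ⊢
    exact hr

theorem seq_wqo (b : ℕ → Bool) (s : ℕ → Ordinal.{u} × (Ordinal.{u} → Option CQ.{u})) :
    ∃ i j, i < j ∧ b i = b j ∧ SeqLe (rO rQ) (s i) (s j) := by
  by_contra hcon
  push Not at hcon
  obtain ⟨D, -, hD, w, hw⟩ := ramsey infinite_univ (lc_sInf.comp b)
  have : BadA (SeqLe (rO rQ)) D (fun X => s (sInf X)) := by
    refine ⟨hD, (lc_sInf.comp s).mono (subset_univ _), fun X hX hXi => ?_⟩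
    refine hcon _ _ (sInf_lt_sh hXi) ?_
    rw [hw X hX hXi, hw (sh X) ((sh_sub X).trans hX) (sh_inf hXi)]
  obtain ⟨D', -, g, hg, -⟩ := seq_bad _ this
  exact bqoO hg

theorem cq_wqo (c : ℕ → CQ.{u}) : ∃ i j, i < j ∧ rQ (c i) (c j) := by
  by_contra hcon
  push Not at hcon
  exact bqo (D := univ) (f := fun X => c (sInf X))
    ⟨infinite_univ, lc_sInf.comp c, fun X _ hXi => hcon _ _ (sInf_lt_sh hXi)⟩

/-- Equimorphic to a valid code. -/
def HH {L : Type u} [LinearOrder L] (P : Set L) : Prop :=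
  ∃ c : CQ.{u}, Nonempty (P ↪o c.1.L) ∧ Nonempty (c.1.L ↪o P)

lemma HH_sub {L : Type u} [LinearOrder L] {P : Set L} (h : P.Subsingleton) : HH P := by
  let c : Code.{u} := Code.mk (LinOrd.of P) PEmpty (fun i => i.elim) (fun i => i.elim)
    (fun i => i.elim) (fun i => i.elim)
  have hc : c.Valid := by
    refine Code.Valid.mk c ⟨fun i => PEmpty.elim i, fun K hK _ => ?_⟩ (fun i => PEmpty.elim i)
    obtain ⟨k⟩ := hK
    refine ⟨OrderEmbedding.ofStrictMono (fun _ : P => k) ?_⟩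
    intro x y hxy
    exact absurd (Subtype.ext (h x.2 y.2)) hxy.ne
  exact ⟨⟨c, hc⟩, ⟨RelEmbedding.refl (α := P) (· ≤ ·)⟩, ⟨RelEmbedding.refl (α := P) (· ≤ ·)⟩⟩

lemma ext_fun {L K : Type u} [LinearOrder L] [LinearOrder K] {S : Set L} {T : Set K}
    (hK : Nonempty K) (g : S → K) (hg : StrictMono g) (hT : ∀ x, g x ∈ T) :
    ∃ u : L → K, StrictMonoOn u S ∧ MapsTo u S T := by
  classical
  refine ⟨fun x => if h : x ∈ S then g ⟨x, h⟩ else hK.some, ?_, ?_⟩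
  · intro x hx y hy hxy
    simp only [hx, hy, dite_true]
    exact hg hxy
  · intro x hx
    simp only [hx, dite_true]
    exact hT _

lemma fib_ord {L : Type u} [LinearOrder L] {b : Bool} {p : Set L → L → Ordinal.{u}} {P : Set L}
    (hM : Mon b (p P) P) {o o' : Ordinal.{u}} (h : o < o') {x y : L} (hx : x ∈ fib p P o)
    (hy : y ∈ fib p P o') : ordB b x y := by
  obtain ⟨hx, rfl⟩ := hx
  obtain ⟨hy, rfl⟩ := hy
  cases b with
  | true =>
    by_contra hc
    exact absurd ((hM y hy x hx (not_lt.1 hc)).1 rfl) h.not_ge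
  | false =>
    by_contra hc
    exact absurd ((hM x hx y hy (not_lt.1 hc)).2 rfl) h.not_ge

theorem exists_code {L : Type u} [LinearOrder L] (sg : Set L → Bool)
    (p : Set L → L → Ordinal.{u}) (hM : ∀ P, Mon (sg P) (p P) P)
    (hterm : ∀ P, ∀ x ∈ P, ∃ k, ((fun Q => Q ∩ {y | p Q y = p Q x})^[k] P).Subsingleton)
    (Q₀ : Set L) : HH Q₀ := by
  classical
  by_contra hQ₀
  let lam : Ordinal.{u} := Order.succ (⨆ q : Set L × L, p q.1 q.2)
  have hlam : ∀ P x, p P x < lam := fun P x =>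
    Order.lt_succ_iff.2 (Ordinal.le_iSup (fun q : Set L × L => p q.1 q.2) (P, x))
  have hterm' : ∀ P, ∀ x ∈ P, ∃ k, HH ((fun Q => fib p Q (p Q x))^[k] P) := by
    intro P x hx
    obtain ⟨k, hk⟩ := hterm P x hx
    exact ⟨k, HH_sub hk⟩
  let step : Set L → Set L → Prop := fun P P' => ¬ HH P' ∧ ∃ o, P' = fib p P o
  let V : Set L → Set (Set L) := fun P => {P' | Relation.ReflTransGen step P P'}
  have hVH : ∀ P, ¬ HH P → ∀ P' ∈ V P, ¬ HH P' := by
    intro P hP P' h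
    rcases Relation.ReflTransGen.cases_tail h with h | ⟨_, -, h⟩
    · rw [h]; exact hP
    · exact h.1
  have hVsub : ∀ P, ∀ P' ∈ V P, P' ⊆ P := by
    intro P P' h
    induction h with
    | refl => exact subset_rfl
    | tail _ h ih =>
      obtain ⟨-, o, rfl⟩ := h
      exact inter_subset_left.trans ih
  have hVtr : ∀ P P' P'', P' ∈ V P → P'' ∈ V P' → P'' ∈ V P := fun P P' P'' h h' =>
    Relation.ReflTransGen.trans h h'
  have hVfib : ∀ P, ∀ P' ∈ V P, ∀ o, ¬ HH (fib p P' o) → fib p P' o ∈ V P := fun P P' h o ho =>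
    Relation.ReflTransGen.tail h ⟨ho, o, rfl⟩
  let lab : Set L → Ordinal.{u} × (Ordinal.{u} → Option CQ.{u}) := fun P =>
    (lam, fun o => if h : HH (fib p P o) then some h.choose else none)
  have hlab1 : ∀ P o (h : HH (fib p P o)), (lab P).2 o = some h.choose := fun P o h => dif_pos h
  have hlab0 : ∀ P o, ¬ HH (fib p P o) → (lab P).2 o = none := fun P o h => dif_neg h
  -- minimal element
  have hmin : ∃ P0, ¬ HH P0 ∧ ∀ P' ∈ V P0, ∀ P1 ∈ V P0, ∃ P2 ∈ V P', sg P1 = sg P2 ∧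
      SeqLe (rO rQ) (lab P1) (lab P2) := by
    by_contra hcon
    push Not at hcon
    have hcon' : ∀ P : {P : Set L // ¬ HH P}, ∃ (P' : {P : Set L // ¬ HH P}) (P1 : Set L),
        P'.1 ∈ V P ∧ P1 ∈ V P ∧ ∀ P2 ∈ V P'.1, sg P1 = sg P2 → ¬ SeqLe (rO rQ) (lab P1) (lab P2) := by
      rintro ⟨P, hP⟩
      obtain ⟨P', h1, P1, h2, h3⟩ := hcon P hP
      exact ⟨⟨P', hVH P hP P' h1⟩, P1, h1, h2, h3⟩
    choose nx s h1 h2 h3 using hcon'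
    let seq : ℕ → {P : Set L // ¬ HH P} := fun n => nx^[n] ⟨Q₀, hQ₀⟩
    have hseq : ∀ n, seq (n+1) = nx (seq n) := fun n => Function.iterate_succ_apply' _ _ _
    have hmono : ∀ n k, (seq (n+k)).1 ∈ V (seq n).1 := by
      intro n k
      induction k with
      | zero => exact Relation.ReflTransGen.refl
      | succ k ih =>
        refine hVtr _ _ _ ih ?_
        rw [← add_assoc, hseq]
        exact h1 _
    obtain ⟨i, j, hij, hb, hs⟩ := seq_wqo (fun n => sg (s (seq n))) (fun n => lab (s (seq n)))
    refine h3 (seq i) (s (seq j)) ?_ hb hs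
    rw [← hseq]
    refine hVtr _ _ _ ?_ (h2 (seq j))
    obtain ⟨k, rfl⟩ := Nat.exists_eq_add_of_lt hij
    have := hmono (i+1) k
    rwa [show i + 1 + k = i + k + 1 by omega] at this
  obtain ⟨P0, hP0, hmin⟩ := hmin
  have hneV : ∀ P ∈ V P0, P.Nonempty := by
    intro P hP
    by_contra hne
    rw [not_nonempty_iff_eq_empty] at hne
    exact hVH P0 hP0 P hP (HH_sub (hne ▸ subsingleton_empty))
  have hP0V : P0 ∈ V P0 := Relation.ReflTransGen.refl
  have hLne : Nonempty L := ⟨(hneV P0 hP0V).some⟩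
  -- homogeneity
  have hhom : ∀ P'' ∈ V P0, ∃ g : P0 → P'', StrictMono g := by
    intro P'' hP''
    refine rec_emb (J := V P0) sg p hM HH hterm' lam hlam (V P0) (hVH P0 hP0) (hVfib P0)
      (fun j => j.1) (fun j => hneV j.1 j.2) ?_ P0 hP0V ⟨P'', hP''⟩
    rintro P hP ⟨j, hj⟩
    obtain ⟨P2, hP2, hsg, ψ, hψ1, hψ2⟩ := hmin j hj P hP
    refine ⟨fun o => fib p P2 (ψ o), fun o _ => inter_subset_left.trans (hVsub _ _ hP2), ?_, ?_⟩
    · intro o o' hoo ho' x hx y hy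
      rw [hsg]
      exact fib_ord (hM P2) (hψ2 o o' hoo ho') hx hy
    · intro o ho
      have hr := (hψ1 o ho).2
      refine ⟨fun hH => ?_, fun hH => ?_⟩
      · rw [hlab1 P o hH] at hr
        by_cases hH2 : HH (fib p P2 (ψ o))
        · rw [hlab1 P2 _ hH2] at hr
          obtain ⟨g1⟩ := hH.choose_spec.1
          obtain ⟨g2⟩ : Nonempty _ := hr
          obtain ⟨g3⟩ := hH2.choose_spec.2
          exact ext_fun hLne (fun x => (g3 (g2 (g1 x))).1)
            (fun x y hxy => g3.strictMono (g2.strictMono (g1.strictMono hxy)))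
            (fun x => (g3 (g2 (g1 x))).2)
        · rw [hlab0 P2 _ hH2] at hr
          exact hr.elim
      · rw [hlab0 P o hH] at hr
        by_cases hH2 : HH (fib p P2 (ψ o))
        · rw [hlab1 P2 _ hH2] at hr
          exact hr.elim
        · refine ⟨⟨fib p P2 (ψ o), hVfib P0 P2 (hVtr _ _ _ hj hP2) _ hH2⟩, id,
            strictMono_id.strictMonoOn _, fun x hx => hx⟩
  -- the code
  let dummy : Code.{u} := Code.mk (LinOrd.of PEmpty) PEmpty (fun i => i.elim) (fun i => i.elim)
    (fun i => i.elim) (fun i => i.elim)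
  let c0 : Code.{u} := Code.mk (LinOrd.of P0) (V P0) (fun i => sg i.1) (fun _ => lam)
    (fun i o => ¬ HH (fib p i.1 o))
    (fun i o => if h : HH (fib p i.1 o) then h.choose.1 else dummy)
  have hc1 : ∀ (i : V P0) o (h : HH (fib p i.1 o)),
      (c0.lab0 i).2 o = some h.choose.1.L := by
    intro i o h
    have h1 : ¬ c0.inf i o := not_not.2 h
    have h2 : c0.e i o = h.choose.1 := dif_pos h
    simp only [Code.lab0, if_neg h1, h2]
  have hc2 : ∀ (i : V P0) o, ¬ HH (fib p i.1 o) → (c0.lab0 i).2 o = none := by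
    intro i o h
    exact if_pos h
  have hval : c0.Valid := by
    refine Code.Valid.mk c0 ⟨?_, ?_⟩ ?_
    · intro (i : V P0)
      have hφ : ∀ o, ∃ g : (((c0.lab0 i).2 o).getD (LinOrd.of P0)) → P0, StrictMono g ∧
          ∀ x, (g x : L) ∈ fib p i.1 o := by
        intro o
        by_cases hH : HH (fib p i.1 o)
        · rw [hc1 i o hH]
          obtain ⟨g⟩ := hH.choose_spec.2
          exact ⟨fun x => ⟨(g x).1, hVsub P0 i.1 i.2 (g x).2.1⟩, fun x y hxy => g.strictMono hxy,
            fun x => (g x).2⟩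
        · rw [hc2 i o hH]
          obtain ⟨g, hg⟩ := hhom _ (hVfib P0 i.1 i.2 o hH)
          exact ⟨fun x => ⟨(g x).1, hVsub P0 i.1 i.2 (g x).2.1⟩, fun x y hxy => hg hxy,
            fun x => (g x).2⟩
      choose φ h1 h2 using hφ
      refine ⟨fun o _ => φ o, fun o _ => h1 o, ?_⟩
      intro o o' _ _ hoo x y
      have := fib_ord (hM i.1) hoo (h2 o x) (h2 o' y)
      change ordB (sg i.1) (φ o x) (φ o' y)
      revert this
      cases sg i.1 <;> exact id
    · intro K hK hcl
      obtain ⟨g, hg⟩ := rec_emb (K := K) (J := Unit) sg p hM HH hterm' lam hlam (V P0) (hVH P0 hP0)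
        (hVfib P0) (fun _ => univ) (fun _ => ⟨hK.some, trivial⟩) (by
          intro P hP _
          obtain ⟨φ, h1, h2⟩ := hcl ⟨P, hP⟩
          refine ⟨fun o => {y | ∃ h : o < lam, y ∈ range (φ o h)}, fun _ _ => subset_univ _, ?_, ?_⟩
          · rintro o o' hoo ho' _ ⟨h, x, rfl⟩ _ ⟨h', y, rfl⟩
            exact h2 o o' h h' hoo x y
          · intro o ho
            have hS : ∃ g : (((c0.lab0 ⟨P, hP⟩).2 o).getD K) → K, StrictMono g ∧
                ∀ x, g x ∈ {y | ∃ h : o < lam, y ∈ range (φ o h)} :=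
              ⟨φ o ho, h1 o ho, fun x => ⟨ho, x, rfl⟩⟩
            beta_reduce
            generalize {y | ∃ h : o < lam, y ∈ range (φ o h)} = TT at hS ⊢
            refine ⟨fun hH => ?_, fun hH => ?_⟩
            · rw [hc1 ⟨P, hP⟩ o hH] at hS
              obtain ⟨g, hg, hg'⟩ := hS
              obtain ⟨g1⟩ := hH.choose_spec.1
              exact ext_fun hK (fun x => g (g1 x)) (fun x y hxy => hg (g1.strictMono hxy))
                (fun x => hg' _)
            · rw [hc2 ⟨P, hP⟩ o hH] at hS
              obtain ⟨g, hg, hg'⟩ := hS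
              exact ⟨(), g, hg.strictMonoOn _, fun x _ => hg' x⟩) P0 hP0V ()
      exact ⟨OrderEmbedding.ofStrictMono (fun x : P0 => (g x).1) (fun x y hxy => hg hxy)⟩
    · intro (i : V P0) o h
      have h : HH (fib p i.1 o) := not_not.1 h
      have h2 : c0.e i o = h.choose.1 := dif_pos h
      rw [h2]
      exact h.choose.2
  exact hP0 ⟨⟨c0, hval⟩, ⟨RelEmbedding.refl (α := P0) (· ≤ ·)⟩, ⟨RelEmbedding.refl (α := P0) (· ≤ ·)⟩⟩

end LaverBQO

/-- The class of σ-scattered linear orders is well quasi-ordered by embeddability. -/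
theorem sigma_scattered_wqo (L : ℕ → Type*) [∀ i, LinearOrder (L i)]
    (h : ∀ i, SigmaScattered (L i)) :
    ∃ i j : ℕ, i < j ∧ Nonempty (L i ↪o L j) := by
  have hc : ∀ i, LaverBQO.HH (Set.univ : Set (L i)) := by
    intro i
    obtain ⟨A, hU, hA⟩ := h i
    obtain ⟨sg, p, h1, h2⟩ := LaverBQO.hausdorff A hU hA
    exact LaverBQO.exists_code sg p h1 h2 Set.univ
  choose c h1 h2 using hc
  obtain ⟨i, j, hij, hr⟩ := LaverBQO.cq_wqo c
  obtain ⟨g1⟩ := h1 i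
  obtain ⟨g2⟩ := hr
  obtain ⟨g3⟩ := h2 j
  refine ⟨i, j, hij, ⟨OrderEmbedding.ofStrictMono (fun x => (g3 (g2 (g1 ⟨x, trivial⟩))).1) ?_⟩⟩
  intro x y hxy
  exact g3.strictMono (g2.strictMono (g1.strictMono (show (⟨x, trivial⟩ : (Set.univ : Set (L i))) < ⟨y, trivial⟩ from hxy)))
end

section
/- The countable linear orders are well quasi-ordered by embeddability: for every sequence ⟨L_i : i ∈ ℕ⟩ of countable linear orders there exist indices i < j such that L_i order-embeds into L_j. -/
namespace Laver

/-- Fusion lemma. -/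
theorem fusion {S : Type*} (dom : S → Set ℕ) (le : S → S → Prop)
    (hinf : ∀ σ, (dom σ).Infinite) (hrefl : ∀ σ, le σ σ)
    (htrans : ∀ a b c, le a b → le b c → le a c)
    (hdom : ∀ a b, le a b → dom a ⊆ dom b)
    (G : ℕ → Finset ℕ → S → Prop)
    (hG : ∀ k s a b, le a b → (∀ i < k, i ∈ dom b → i ∈ dom a) → G k s b → G k s a)
    (hstep : ∀ σ k s, ∃ σ', le σ' σ ∧ (∀ i < k, i ∈ dom σ → i ∈ dom σ') ∧ G k s σ')
    (σ₀ : S) :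
    ∃ σ : ℕ → S, σ 0 = σ₀ ∧ (∀ n m, n ≤ m → le (σ m) (σ n)) ∧ (⋂ n, dom (σ n)).Infinite ∧
      ∀ k, (k = 0 ∨ ∃ d ∈ ⋂ n, dom (σ n), k = d + 1) → ∀ s ⊆ Finset.range k, ∃ n, G k s (σ n) := by
  classical
  have hstep2 : ∀ k (F : Finset (Finset ℕ)) σ, ∃ σ', le σ' σ ∧
      (∀ i < k, i ∈ dom σ → i ∈ dom σ') ∧ ∀ s ∈ F, G k s σ' := by
    intro k F
    induction F using Finset.induction_on with
    | empty => intro σ; exact ⟨σ, hrefl σ, fun _ _ h => h, by simp⟩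
    | insert s F _ ih =>
      intro σ
      obtain ⟨σ1, h1, h2, h3⟩ := ih σ
      obtain ⟨σ2, g1, g2, g3⟩ := hstep σ1 k s
      refine ⟨σ2, htrans _ _ _ g1 h1, fun i hi h => g2 i hi (h2 i hi h), ?_⟩
      intro t ht
      rcases Finset.mem_insert.1 ht with rfl | ht
      · exact g3
      · exact hG _ _ _ _ g1 g2 (h3 t ht)
  choose st st1 st2 st3 using fun k σ => hstep2 k (Finset.range k).powerset σ
  have hnext : ∀ σ (k : ℕ), ∃ d, (d ∈ dom σ ∧ k ≤ d) ∧ ∀ e ∈ dom σ, k ≤ e → d ≤ e := by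
    intro σ k
    have : ∃ d, d ∈ dom σ ∧ k ≤ d := by
      obtain ⟨d, hd, hk⟩ := (hinf σ).exists_gt k
      exact ⟨d, hd, hk.le⟩
    exact ⟨Nat.find this, Nat.find_spec this, fun e he hk => Nat.find_min' this ⟨he, hk⟩⟩
  choose nx nx1 nx2 using hnext
  let sq : ℕ → S × ℕ := fun n => Nat.rec (σ₀, 0)
    (fun _ p => (st p.2 p.1, nx (st p.2 p.1) p.2 + 1)) n
  let σ : ℕ → S := fun n => (sq n).1
  let κ : ℕ → ℕ := fun n => (sq n).2
  have eσ : ∀ n, σ (n+1) = st (κ n) (σ n) := fun n => rfl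
  have eκ : ∀ n, κ (n+1) = nx (σ (n+1)) (κ n) + 1 := fun n => rfl
  have hle : ∀ n m, n ≤ m → le (σ m) (σ n) := by
    intro n m h
    induction m, h using Nat.le_induction with
    | base => exact hrefl _
    | succ m _ ih => rw [eσ]; exact htrans _ _ _ (st1 _ _) ih
  have hκ : StrictMono κ := by
    apply strictMono_nat_of_lt_succ
    intro n
    rw [eκ]
    have := (nx1 (σ (n+1)) (κ n)).2
    omega
  have hhead : ∀ n m, n ≤ m → ∀ i < κ n, i ∈ dom (σ n) → i ∈ dom (σ m) := by
    intro n m h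
    induction m, h using Nat.le_induction with
    | base => exact fun _ _ h => h
    | succ m hm ih =>
      intro i hi h
      rw [eσ]
      exact st2 _ _ i (hi.trans_le (hκ.monotone hm)) (ih i hi h)
  have hheadD : ∀ n, ∀ i < κ n, i ∈ dom (σ n) → i ∈ ⋂ n, dom (σ n) := by
    intro n i hi h
    rw [Set.mem_iInter]
    intro m
    rcases le_total n m with h1 | h1
    · exact hhead n m h1 i hi h
    · exact hdom _ _ (hle _ _ h1) h
  refine ⟨σ, rfl, hle, ?_, ?_⟩
  · rw [Set.infinite_iff_exists_gt]
    intro a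
    have h1 := nx1 (σ (a+1+1)) (κ (a+1))
    refine ⟨nx (σ (a+1+1)) (κ (a+1)), hheadD (a+1+1) _ ?_ h1.1, ?_⟩
    · rw [eκ (a+1)]; exact Nat.lt_succ_self _
    · have : a + 1 ≤ κ (a+1) := hκ.le_apply
      omega
  · intro k hk s hs
    have key : ∃ n, κ n = k := by
      rcases hk with rfl | ⟨d, hd, rfl⟩
      · exact ⟨0, rfl⟩
      · have hex : ∃ n, d < κ n := ⟨d+1, by have : d + 1 ≤ κ (d+1) := hκ.le_apply
                                            omega⟩
        obtain ⟨n, hn, hmin⟩ : ∃ n, d < κ n ∧ ∀ m < n, ¬ d < κ m :=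
          ⟨Nat.find hex, Nat.find_spec hex, fun m hm => Nat.find_min hex hm⟩
        cases n with
        | zero => exact absurd hn (Nat.not_lt_zero _)
        | succ n =>
          refine ⟨n+1, ?_⟩
          have h1 := hmin n (Nat.lt_succ_self n)
          have h2 := nx2 (σ (n+1)) (κ n) d (Set.mem_iInter.1 hd (n+1)) (by omega)
          rw [eκ] at hn ⊢
          omega
    obtain ⟨n, rfl⟩ := key
    exact ⟨n+1, by rw [eσ]; exact st3 _ _ s (Finset.mem_powerset.2 hs)⟩

/-- Relative openness. -/
def OpenOn (A : Set ℕ) (O : Set ℕ → Prop) : Prop :=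
  ∀ X, X ⊆ A → X.Infinite → O X →
    ∃ k, ∀ Y, Y ⊆ A → Y.Infinite → (∀ i < k, i ∈ Y ↔ i ∈ X) → O Y

def Acc (A₀ : Set ℕ) (O : Set ℕ → Prop) (B : Set ℕ) (k : ℕ) (s : Finset ℕ) : Prop :=
  ∀ X, X ⊆ A₀ → X.Infinite → (∀ i < k, i ∈ X ↔ i ∈ s) → (∀ i ∈ X, k ≤ i → i ∈ B) → O X

theorem exists_pred (X : Set ℕ) (d : ℕ) :
    (∀ i < d, i ∉ X) ∨ ∃ p ∈ X, p < d ∧ ∀ i < d, i ∈ X → i ≤ p := by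
  by_cases h : ∃ i < d, i ∈ X
  · right
    have hf : {i | i < d ∧ i ∈ X}.Finite := (Set.finite_lt_nat d).subset fun i hi => hi.1
    obtain ⟨p, hp, hp2⟩ := Set.exists_max_image _ id hf (by obtain ⟨i, h1, h2⟩ := h; exact ⟨i, h1, h2⟩)
    exact ⟨p, hp.2, hp.1, fun i h1 h2 => hp2 i ⟨h1, h2⟩⟩
  · left; push Not at h; exact h

theorem nashWilliams (A : Set ℕ) (hA : A.Infinite) (O : Set ℕ → Prop) (hO : OpenOn A O) :
    ∃ B ⊆ A, B.Infinite ∧ ((∀ X ⊆ B, X.Infinite → O X) ∨ (∀ X ⊆ B, X.Infinite → ¬ O X)) := by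
  classical
  -- first fusion
  obtain ⟨σ, hσ0, hσ, hDinf, hDG⟩ := fusion (S := {B : Set ℕ // B ⊆ A ∧ B.Infinite})
    (fun B => B.1) (fun B C => B.1 ⊆ C.1) (fun B => B.2.2) (fun _ => subset_rfl)
    (fun _ _ _ h1 h2 => h1.trans h2) (fun _ _ h => h)
    (fun k s B => Acc A O B.1 k s ∨ ∀ C ⊆ B.1, C.Infinite → ¬ Acc A O C k s)
    (by
      intro k s a b hab _ h
      rcases h with h | h
      · exact Or.inl fun X h1 h2 h3 h4 => h X h1 h2 h3 fun i hi hk => hab (h4 i hi hk)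
      · exact Or.inr fun C hC => h C (hC.trans hab))
    (by
      intro B k s
      by_cases h : ∃ C ⊆ B.1, C.Infinite ∧ Acc A O C k s
      · obtain ⟨C, hC, hi, hacc⟩ := h
        refine ⟨⟨{i ∈ B.1 | i < k} ∪ C, ?_, hi.mono Set.subset_union_right⟩, ?_, ?_, ?_⟩
        · exact Set.union_subset (fun i hi => B.2.1 hi.1) (hC.trans B.2.1)
        · exact Set.union_subset (fun i hi => hi.1) hC
        · exact fun i hi h => Or.inl ⟨h, hi⟩
        · left
          intro X h1 h2 h3 h4
          refine hacc X h1 h2 h3 fun i hi hk => ?_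
          rcases h4 i hi hk with h | h
          · exact absurd h.2 (by omega)
          · exact h
      · push Not at h
        exact ⟨B, subset_rfl, fun _ _ h => h, Or.inr h⟩)
    ⟨A, subset_rfl, hA⟩
  set D : Set ℕ := ⋂ n, (σ n).1 with hD
  have hDA : D ⊆ A := by
    have := Set.iInter_subset (fun n => (σ n).1) 0
    rw [hσ0] at this
    exact this
  let rej : ℕ → Finset ℕ → Prop := fun k s => ∀ C ⊆ D, C.Infinite → ¬ Acc A O C k s
  have hdec : ∀ k, (k = 0 ∨ ∃ d ∈ D, k = d + 1) → ∀ s ⊆ Finset.range k,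
      Acc A O D k s ∨ rej k s := by
    intro k hk s hs
    obtain ⟨n, hn⟩ := hDG k hk s hs
    have hsub : D ⊆ (σ n).1 := Set.iInter_subset _ n
    rcases hn with h | h
    · exact Or.inl fun X h1 h2 h3 h4 => h X h1 h2 h3 fun i hi hk => hsub (h4 i hi hk)
    · exact Or.inr fun C hC => h C (hC.trans hsub)
  by_cases hacc : Acc A O D 0 ∅
  · exact ⟨D, hDA, hDinf, Or.inl fun X hX hi => hacc X (hX.trans hDA) hi (by simp)
      fun i hi _ => hX hi⟩
  have hrej0 : rej 0 ∅ := (hdec 0 (Or.inl rfl) ∅ (by simp)).resolve_left hacc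
  have hfin : ∀ k s, s ⊆ Finset.range k → rej k s →
      {d ∈ D | k ≤ d ∧ Acc A O D (d+1) (insert d s)}.Finite := by
    intro k s hs hr
    by_contra hinf
    refine hr _ (fun d hd => hd.1) hinf ?_
    intro X h1 h2 h3 h4
    have hex : ∃ d, d ∈ X ∧ k ≤ d := by
      obtain ⟨d, hd, hk⟩ := h2.exists_gt k
      exact ⟨d, hd, hk.le⟩
    obtain ⟨d, ⟨hdX, hkd⟩, hmin⟩ : ∃ d, (d ∈ X ∧ k ≤ d) ∧ ∀ e ∈ X, k ≤ e → d ≤ e :=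
      ⟨Nat.find hex, Nat.find_spec hex, fun e he hk => Nat.find_min' hex ⟨he, hk⟩⟩
    have hd := h4 d hdX hkd
    refine hd.2.2 X h1 h2 ?_ fun i hi hk => (h4 i hi (by omega)).1
    intro i hi
    rw [Finset.mem_insert]
    constructor
    · intro hiX
      by_cases hik : i < k
      · exact Or.inr ((h3 i hik).1 hiX)
      · have := hmin i hiX (by omega)
        left; omega
    · rintro (rfl | h)
      · exact hdX
      · exact (h3 i (Finset.mem_range.1 (hs h))).2 h
  -- second fusion
  obtain ⟨τ, hτ0, hτ, hEinf, hEG⟩ := fusion (S := {B : Set ℕ // B ⊆ D ∧ B.Infinite})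
    (fun B => B.1) (fun B C => B.1 ⊆ C.1) (fun B => B.2.2) (fun _ => subset_rfl)
    (fun _ _ _ h1 h2 => h1.trans h2) (fun _ _ h => h)
    (fun k s B => s ⊆ Finset.range k → rej k s → ∀ d ∈ B.1, k ≤ d → rej (d+1) (insert d s))
    (by
      intro k s a b hab _ h hs hr d hd hk
      exact h hs hr d (hab hd) hk)
    (by
      intro B k s
      by_cases hs : s ⊆ Finset.range k
      swap
      · exact ⟨B, subset_rfl, fun _ _ h => h, fun h => absurd h hs⟩
      by_cases hr : rej k s
      swap
      · exact ⟨B, subset_rfl, fun _ _ h => h, fun _ h => absurd h hr⟩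
      refine ⟨⟨B.1 \ {d ∈ D | k ≤ d ∧ Acc A O D (d+1) (insert d s)},
        Set.sdiff_subset.trans B.2.1, B.2.2.sdiff (hfin k s hs hr)⟩, Set.sdiff_subset, ?_, ?_⟩
      · intro i hi h
        exact ⟨h, fun h' => absurd h'.2.1 (by omega)⟩
      · intro _ _ d hd hk
        refine (hdec (d+1) (Or.inr ⟨d, B.2.1 hd.1, rfl⟩) (insert d s) ?_).resolve_left ?_
        · intro i hi
          rcases Finset.mem_insert.1 hi with rfl | h
          · simp
          · have := Finset.mem_range.1 (hs h)
            exact Finset.mem_range.2 (by omega)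
        · exact fun h => hd.2 ⟨B.2.1 hd.1, hk, h⟩)
    ⟨D, subset_rfl, hDinf⟩
  set E : Set ℕ := ⋂ n, (τ n).1 with hE
  have hED : E ⊆ D := by
    have := Set.iInter_subset (fun n => (τ n).1) 0
    rw [hτ0] at this
    exact this
  have hEG' : ∀ k, (k = 0 ∨ ∃ d ∈ E, k = d + 1) → ∀ s ⊆ Finset.range k, rej k s →
      ∀ d ∈ E, k ≤ d → rej (d+1) (insert d s) := by
    intro k hk s hs hr d hd hkd
    obtain ⟨n, hn⟩ := hEG k hk s hs
    exact hn hs hr d (Set.iInter_subset (fun n => (τ n).1) n hd) hkd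
  refine ⟨E, hED.trans hDA, hEinf, Or.inr ?_⟩
  intro X hX hXi hOX
  have hall : ∀ d ∈ X, rej (d+1) ((Finset.range (d+1)).filter (· ∈ X)) := by
    intro d
    induction d using Nat.strong_induction_on with
    | _ d ih =>
      intro hd
      rcases exists_pred X d with h | ⟨p, hp, hpd, hmax⟩
      · have := hEG' 0 (Or.inl rfl) ∅ (by simp) hrej0 d (hX hd) (Nat.zero_le _)
        convert this using 1
        ext i
        simp only [Finset.mem_filter, Finset.mem_range, Finset.mem_insert, Finset.notMem_empty]
        constructor
        · rintro ⟨h1, h2⟩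
          by_contra h3
          exact h i (by omega) h2
        · rintro (rfl | h)
          · exact ⟨by omega, hd⟩
          · exact h.elim
      · have := hEG' (p+1) (Or.inr ⟨p, hX hp, rfl⟩) _ (Finset.filter_subset _ _) (ih p hpd hp) d
          (hX hd) hpd
        convert this using 1
        ext i
        simp only [Finset.mem_filter, Finset.mem_range, Finset.mem_insert]
        constructor
        · rintro ⟨h1, h2⟩
          by_cases h3 : i = d
          · exact Or.inl h3
          · exact Or.inr ⟨by have := hmax i (by omega) h2; omega, h2⟩
        · rintro (rfl | h)
          · exact ⟨by omega, hd⟩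
          · exact ⟨by omega, h.2⟩
  obtain ⟨k, hk⟩ := hO X (hX.trans (hED.trans hDA)) hXi hOX
  obtain ⟨d, hd, hkd⟩ := hXi.exists_gt k
  refine hall d hd D subset_rfl hDinf ?_
  intro Y h1 h2 h3 h4
  refine hk Y h1 h2 fun i hi => ?_
  rw [h3 i (by omega)]
  simp only [Finset.mem_filter, Finset.mem_range]
  exact ⟨fun h => h.2, fun h => ⟨by omega, h⟩⟩

end Laver

namespace Laver

/-- Continuity of `f` on the infinite subsets of `A`. -/
def Cont {Q : Type*} (A : Set ℕ) (f : Set ℕ → Q) : Prop :=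
  ∀ X, X ⊆ A → X.Infinite →
    ∃ k, ∀ Y, Y ⊆ A → Y.Infinite → (∀ i < k, i ∈ Y ↔ i ∈ X) → f Y = f X

/-- Removing the least element. -/
def tl (X : Set ℕ) : Set ℕ := X \ {sInf X}

theorem tl_sub (X : Set ℕ) : tl X ⊆ X := Set.sdiff_subset

theorem tl_inf {X : Set ℕ} (h : X.Infinite) : (tl X).Infinite :=
  h.sdiff (Set.finite_singleton _)

theorem tl_agree {X Y : Set ℕ} (hX : X.Nonempty) {k : ℕ} (hk : sInf X < k)
    (h : ∀ i < k, i ∈ Y ↔ i ∈ X) : sInf Y = sInf X ∧ ∀ i < k, i ∈ tl Y ↔ i ∈ tl X := by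
  have h1 : sInf X ∈ Y := (h _ hk).2 (Nat.sInf_mem hX)
  have h2 : sInf Y ≤ sInf X := Nat.sInf_le h1
  have h3 : sInf Y ∈ X := (h _ (by omega)).1 (Nat.sInf_mem ⟨_, h1⟩)
  have h4 : sInf X ≤ sInf Y := Nat.sInf_le h3
  have h5 : sInf Y = sInf X := by omega
  refine ⟨h5, fun i hi => ?_⟩
  unfold tl
  rw [h5]
  simp only [Set.mem_sdiff, h i hi]

theorem Cont.mono {Q : Type*} {A B : Set ℕ} {f : Set ℕ → Q} (h : Cont A f) (hB : B ⊆ A) :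
    Cont B f := by
  intro X hX hi
  obtain ⟨k, hk⟩ := h X (hX.trans hB) hi
  exact ⟨k, fun Y hY => hk Y (hY.trans hB)⟩

/-- Homogeneous sets for two-colourings. -/
theorem ramsey_prop {Q : Type*} {A : Set ℕ} (hA : A.Infinite) {f : Set ℕ → Q} (hf : Cont A f)
    (P : Q → Prop) : ∃ B ⊆ A, B.Infinite ∧
      ((∀ X ⊆ B, X.Infinite → P (f X)) ∨ (∀ X ⊆ B, X.Infinite → ¬ P (f X))) := by
  apply nashWilliams A hA (fun X => P (f X))
  intro X hX hi hP
  obtain ⟨k, hk⟩ := hf X hX hi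
  exact ⟨k, fun Y hY hYi h => by show P (f Y); rw [hk Y hY hYi h]; exact hP⟩

/-- Stemmed version of the Nash-Williams theorem. -/
theorem nw_stem (A C : Set ℕ) (hC : C ⊆ A) (hi : C.Infinite) (O : Set ℕ → Prop) (hO : OpenOn A O)
    (k : ℕ) (s : Finset ℕ) (hs : (s : Set ℕ) ⊆ A) :
    ∃ B ⊆ C, B.Infinite ∧ ((∀ X, X ⊆ A → X.Infinite → (∀ i < k, i ∈ X ↔ i ∈ s) →
      (∀ i ∈ X, k ≤ i → i ∈ B) → O X) ∨ (∀ X, X ⊆ A → X.Infinite → (∀ i < k, i ∈ X ↔ i ∈ s) →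
      (∀ i ∈ X, k ≤ i → i ∈ B) → ¬ O X)) := by
  classical
  let J : Set ℕ → Set ℕ := fun X => {i ∈ X | k ≤ i} ∪ {i | i ∈ s ∧ i < k}
  have hJinf : ∀ X : Set ℕ, X.Infinite → (J X).Infinite := by
    intro X hX
    have : X ⊆ J X ∪ {i | i < k} := by
      intro i hi
      by_cases h : i < k
      · exact Or.inr h
      · exact Or.inl (Or.inl ⟨hi, by omega⟩)
    by_contra h
    exact hX (((Set.not_infinite.1 h).union (Set.finite_lt_nat k)).subset this)
  have hJA : ∀ X, X ⊆ A → J X ⊆ A := by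
    intro X hX i hi
    rcases hi with hi | hi
    · exact hX hi.1
    · exact hs hi.1
  obtain ⟨B, hB, hBi, h⟩ := nashWilliams C hi (fun X => O (J X)) (by
    intro X hX hXi hOX
    obtain ⟨m, hm⟩ := hO (J X) (hJA X (hX.trans hC)) (hJinf X hXi) hOX
    refine ⟨m, fun Y hY hYi hag => hm (J Y) (hJA Y (hY.trans hC)) (hJinf Y hYi) ?_⟩
    intro i hi
    simp only [J, Set.mem_union, Set.mem_setOf_eq, hag i hi])
  have key : ∀ X : Set ℕ, X.Infinite → (∀ i < k, i ∈ X ↔ i ∈ s) → (∀ i ∈ X, k ≤ i → i ∈ B) →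
      ∃ Z ⊆ B, Z.Infinite ∧ J Z = X := by
    intro X hXi hst hXB
    refine ⟨{i ∈ X | k ≤ i}, fun i hi => hXB i hi.1 hi.2, ?_, ?_⟩
    · have : X ⊆ {i ∈ X | k ≤ i} ∪ {i | i < k} := by
        intro i hi
        by_cases h : i < k
        · exact Or.inr h
        · exact Or.inl ⟨hi, by omega⟩
      intro h
      exact hXi ((h.union (Set.finite_lt_nat k)).subset this)
    · ext i
      simp only [J, Set.mem_union, Set.mem_setOf_eq]
      by_cases h : i < k
      · rw [hst i h]
        constructor
        · rintro (h' | h')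
          · exact h'.1.1
          · exact h'.1
        · exact fun h' => Or.inr ⟨h', h⟩
      · constructor
        · rintro (h' | h')
          · exact h'.1.1
          · omega
        · exact fun h' => Or.inl ⟨⟨h', by omega⟩, by omega⟩
  refine ⟨B, hB, hBi, ?_⟩
  rcases h with h | h
  · left
    intro X _ h2 h3 h4
    obtain ⟨Z, z1, z2, rfl⟩ := key X h2 h3 h4
    exact h Z z1 z2
  · right
    intro X _ h2 h3 h4
    obtain ⟨Z, z1, z2, rfl⟩ := key X h2 h3 h4
    exact h Z z1 z2

/-- A pointwise eventually constant limit of continuous functions is continuous on a smaller set. -/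
theorem limit_cont {Q : Type*} (D : Set ℕ) (hD : D.Infinite) (f : ℕ → Set ℕ → Q)
    (hf : ∀ n, Cont D (f n)) (g : Set ℕ → Q)
    (hg : ∀ X ⊆ D, X.Infinite → ∃ N, ∀ n ≥ N, f n X = g X) :
    ∃ C ⊆ D, C.Infinite ∧ Cont C g := by
  classical
  let O : ℕ → Set ℕ → Prop := fun m X => ∃ n ≥ m, f n X ≠ f m X
  have hO : ∀ m, OpenOn D (O m) := by
    rintro m X hX hXi ⟨n, hnm, hne⟩
    obtain ⟨k1, h1⟩ := hf n X hX hXi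
    obtain ⟨k2, h2⟩ := hf m X hX hXi
    refine ⟨max k1 k2, fun Y hY hYi hag => ⟨n, hnm, ?_⟩⟩
    rw [h1 Y hY hYi fun i hi => hag i (lt_of_lt_of_le hi (le_max_left _ _)),
      h2 Y hY hYi fun i hi => hag i (lt_of_lt_of_le hi (le_max_right _ _))]
    exact hne
  obtain ⟨σ, hσ0, hσ, hCinf, hCG⟩ := fusion (S := {B : Set ℕ // B ⊆ D ∧ B.Infinite})
    (fun B => B.1) (fun B C => B.1 ⊆ C.1) (fun B => B.2.2) (fun _ => subset_rfl)
    (fun _ _ _ h1 h2 => h1.trans h2) (fun _ _ h => h)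
    (fun k s B => (∀ X ⊆ B.1, X.Infinite → (∀ i < k, i ∈ X ↔ i ∈ s) → O k X) ∨
      (∀ X ⊆ B.1, X.Infinite → (∀ i < k, i ∈ X ↔ i ∈ s) → ¬ O k X))
    (by
      intro k s a b hab _ h
      rcases h with h | h
      · exact Or.inl fun X hX => h X (hX.trans hab)
      · exact Or.inr fun X hX => h X (hX.trans hab))
    (by
      intro B k s
      have hs : ((s.filter (· ∈ D) : Finset ℕ) : Set ℕ) ⊆ D := by
        intro i hi
        exact (Finset.mem_filter.1 (Finset.mem_coe.1 hi)).2
      obtain ⟨E, hE, hEi, h⟩ := nw_stem D B.1 B.2.1 B.2.2 (O k) (hO k) k _ hs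
      have hsub : {i ∈ B.1 | i < k} ∪ E ⊆ B.1 := Set.union_subset (fun i hi => hi.1) hE
      refine ⟨⟨{i ∈ B.1 | i < k} ∪ E, hsub.trans B.2.1, hEi.mono Set.subset_union_right⟩,
        hsub, fun i hi h => Or.inl ⟨h, hi⟩, ?_⟩
      have aux : ∀ X ⊆ {i ∈ B.1 | i < k} ∪ E, (∀ i < k, i ∈ X ↔ i ∈ s) → X ⊆ D ∧
          (∀ i < k, i ∈ X ↔ i ∈ s.filter (· ∈ D)) ∧ (∀ i ∈ X, k ≤ i → i ∈ E) := by
        intro X hX hst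
        have hXD : X ⊆ D := hX.trans (hsub.trans B.2.1)
        refine ⟨hXD, fun i hi => ?_, fun i hi hk => ?_⟩
        · rw [Finset.mem_filter]
          exact ⟨fun h => ⟨(hst i hi).1 h, hXD h⟩, fun h => (hst i hi).2 h.1⟩
        · rcases hX hi with h | h
          · exact absurd h.2 (by omega)
          · exact h
      rcases h with h | h
      · exact Or.inl fun X hX hXi hst =>
          h X (aux X hX hst).1 hXi (aux X hX hst).2.1 (aux X hX hst).2.2
      · exact Or.inr fun X hX hXi hst =>
          h X (aux X hX hst).1 hXi (aux X hX hst).2.1 (aux X hX hst).2.2)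
    ⟨D, subset_rfl, hD⟩
  set C : Set ℕ := ⋂ n, (σ n).1 with hC
  have hCD : C ⊆ D := by
    have := Set.iInter_subset (fun n => (σ n).1) 0
    rw [hσ0] at this
    exact this
  refine ⟨C, hCD, hCinf, ?_⟩
  intro X hX hXi
  obtain ⟨N, hN⟩ := hg X (hX.trans hCD) hXi
  obtain ⟨d, hd, hNd⟩ := hXi.exists_gt N
  obtain ⟨n, hn⟩ := hCG (d+1) (Or.inr ⟨d, hX hd, rfl⟩) ((Finset.range (d+1)).filter (· ∈ X))
    (Finset.filter_subset _ _)
  have hCn : C ⊆ (σ n).1 := Set.iInter_subset (fun n => (σ n).1) n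
  have hst : ∀ Y : Set ℕ, (∀ i < d+1, i ∈ Y ↔ i ∈ X) →
      ∀ i < d+1, i ∈ Y ↔ i ∈ (Finset.range (d+1)).filter (· ∈ X) := by
    intro Y hY i hi
    rw [hY i hi, Finset.mem_filter, Finset.mem_range]
    exact ⟨fun h => ⟨hi, h⟩, fun h => h.2⟩
  have hnO : ¬ O (d+1) X := by
    rintro ⟨n, hn, hne⟩
    exact hne (by rw [hN n (by omega), hN (d+1) (by omega)])
  have hno : ∀ Y ⊆ C, Y.Infinite → (∀ i < d+1, i ∈ Y ↔ i ∈ X) → ¬ O (d+1) Y := by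
    intro Y hY hYi hag
    rcases hn with h | h
    · exact absurd (h X (hX.trans hCn) hXi (hst X fun _ _ => Iff.rfl)) hnO
    · exact h Y (hY.trans hCn) hYi (hst Y hag)
  obtain ⟨k, hk⟩ := hf (d+1) X (hX.trans hCD) hXi
  refine ⟨max k (d+1), fun Y hY hYi hag => ?_⟩
  have h1 := hk Y (hY.trans hCD) hYi fun i hi => hag i (lt_of_lt_of_le hi (le_max_left _ _))
  have h2 := hno Y hY hYi fun i hi => hag i (lt_of_lt_of_le hi (le_max_right _ _))
  obtain ⟨N', hN'⟩ := hg Y (hY.trans hCD) hYi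
  have h3 : f (max N' (d+1)) Y = f (d+1) Y := by
    by_contra hne
    exact h2 ⟨_, le_max_right _ _, hne⟩
  rw [← hN (d+1) (by omega), ← hN' _ (le_max_left N' (d+1)), h3, h1]

/-- Bad arrays. -/
def Bad {Q : Type*} (R : Q → Q → Prop) (A : Set ℕ) (f : Set ℕ → Q) : Prop :=
  ∀ X ⊆ A, X.Infinite → ¬ R (f X) (f (tl X))

/-- Bundled bad arrays. -/
structure BadArr {Q : Type*} (R : Q → Q → Prop) where
  A : Set ℕ
  f : Set ℕ → Q
  inf : A.Infinite
  cont : Cont A f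
  bad : Bad R A f

/-- The minimal bad array lemma. -/
theorem minimal_bad {Q : Type*} (R lt : Q → Q → Prop) (wf : WellFounded lt)
    (ltt : ∀ a b c, lt a b → lt b c → lt a c)
    (hR : ∀ p a b, lt a b → R p a → R p b) (σ₀ : BadArr R) :
    ∃ τ : BadArr R, ∀ ρ : BadArr R, ρ.A ⊆ τ.A → ¬ ∀ X ⊆ ρ.A, X.Infinite → lt (ρ.f X) (τ.f X) := by
  classical
  let le : BadArr R → BadArr R → Prop := fun a b =>
    a.A ⊆ b.A ∧ ∀ X ⊆ a.A, X.Infinite → a.f X = b.f X ∨ lt (a.f X) (b.f X)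
  have lle : ∀ a b c : Q, (a = b ∨ lt a b) → (b = c ∨ lt b c) → (a = c ∨ lt a c) := by
    rintro a b c (rfl | h) (rfl | h')
    · exact Or.inl rfl
    · exact Or.inr h'
    · exact Or.inr h
    · exact Or.inr (ltt _ _ _ h h')
  have lll : ∀ a b c : Q, lt a b → (b = c ∨ lt b c) → lt a c := by
    rintro a b c h (rfl | h')
    · exact h
    · exact ltt _ _ _ h h'
  have htrans : ∀ a b c, le a b → le b c → le a c := by
    intro a b c h1 h2
    refine ⟨h1.1.trans h2.1, fun X hX hi => ?_⟩
    exact lle _ _ _ (h1.2 X hX hi) (h2.2 X (hX.trans h1.1) hi)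
  let Dec : BadArr R → ℕ → Finset ℕ → Q → Prop := fun a k s w =>
    ∀ X ⊆ a.A, X.Infinite → (∀ i < k, i ∈ X ↔ i ∈ s) → a.f X = w
  obtain ⟨σ, hσ0, hσ, hDinf, hDG⟩ := fusion (S := BadArr R)
    (fun a => a.A) le (fun a => a.inf) (fun a => ⟨subset_rfl, fun _ _ _ => Or.inl rfl⟩)
    htrans (fun _ _ h => h.1)
    (fun k s a => ∀ b, le b a → (∀ i < k, i ∈ a.A → i ∈ b.A) → ∀ w, Dec b k s w →
      ∀ X ⊆ a.A, X.Infinite → (∀ i < k, i ∈ X ↔ i ∈ s) → ¬ lt w (a.f X))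
    (by
      intro k s a b hab hhead h c hca hch w hw X hX hXi hst hlt
      refine h c (htrans _ _ _ hca hab) (fun i hi h => hch i hi (hhead i hi h)) w hw X
        (hX.trans hab.1) hXi hst ?_
      exact lll _ _ _ hlt (hab.2 X hX hXi))
    (by
      intro a k s
      let V : Set Q := {w | ∃ b, le b a ∧ (∀ i < k, i ∈ a.A → i ∈ b.A) ∧ Dec b k s w}
      by_cases hV : V.Nonempty
      · obtain ⟨v, ⟨b, hb1, hb2, hb3⟩, hmin⟩ := wf.has_min V hV
        refine ⟨b, hb1, hb2, ?_⟩
        intro c hc hch w hw X hX hXi hst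
        rw [hb3 X hX hXi hst]
        exact hmin w ⟨c, htrans _ _ _ hc hb1, fun i hi h => hch i hi (hb2 i hi h), hw⟩
      · refine ⟨a, ⟨subset_rfl, fun _ _ _ => Or.inl rfl⟩, fun _ _ h => h, ?_⟩
        intro c hc hch w hw
        exact absurd ⟨w, c, hc, hch, hw⟩ hV)
    σ₀
  set D : Set ℕ := ⋂ n, (σ n).A with hD
  have hDn : ∀ n, D ⊆ (σ n).A := fun n => Set.iInter_subset (fun n => (σ n).A) n
  have hev : ∀ X ⊆ D, X.Infinite → ∃ v, ∃ N, ∀ n ≥ N, (σ n).f X = v := by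
    intro X hX hXi
    obtain ⟨v, ⟨N, rfl⟩, hmin⟩ := wf.has_min (Set.range fun n => (σ n).f X) ⟨_, 0, rfl⟩
    refine ⟨(σ N).f X, N, fun n hn => ?_⟩
    exact ((hσ N n hn).2 X (hX.trans (hDn n)) hXi).resolve_right (hmin _ ⟨n, rfl⟩)
  let g : Set ℕ → Q := fun X => if h : X ⊆ D ∧ X.Infinite then (hev X h.1 h.2).choose
    else (σ 0).f X
  have hg : ∀ X ⊆ D, X.Infinite → ∃ N, ∀ n ≥ N, (σ n).f X = g X := by
    intro X h1 h2
    have : g X = (hev X h1 h2).choose := dif_pos ⟨h1, h2⟩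
    rw [this]
    exact (hev X h1 h2).choose_spec
  obtain ⟨C, hCD, hCi, hCc⟩ := limit_cont D hDinf (fun n => (σ n).f)
    (fun n => (σ n).cont.mono (hDn n)) g hg
  refine ⟨⟨C, g, hCi, hCc, ?_⟩, ?_⟩
  · intro X hX hXi
    obtain ⟨N1, h1⟩ := hg X (hX.trans hCD) hXi
    obtain ⟨N2, h2⟩ := hg (tl X) ((tl_sub X).trans (hX.trans hCD)) (tl_inf hXi)
    rw [← h1 _ (le_max_left N1 N2), ← h2 _ (le_max_right N1 N2)]
    exact (σ _).bad X (hX.trans (hCD.trans (hDn _))) hXi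
  · intro ρ hρ hlt
    simp only at hρ hlt
    have hBD : ρ.A ⊆ D := hρ.trans hCD
    obtain ⟨k0, hk0⟩ := ρ.cont ρ.A subset_rfl ρ.inf
    obtain ⟨d, hd, hkd⟩ := ρ.inf.exists_gt k0
    set s := (Finset.range (d+1)).filter (· ∈ ρ.A) with hs
    have hsB : ∀ i < d+1, i ∈ ρ.A ↔ i ∈ s := by
      intro i hi
      rw [hs, Finset.mem_filter, Finset.mem_range]
      exact ⟨fun h => ⟨hi, h⟩, fun h => h.2⟩
    obtain ⟨n, hn⟩ := hDG (d+1) (Or.inr ⟨d, hBD hd, rfl⟩) s (Finset.filter_subset _ _)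
    have hBn : ρ.A ⊆ (σ n).A := hBD.trans (hDn n)
    have hfle : ∀ X ⊆ D, X.Infinite → g X = (σ n).f X ∨ lt (g X) ((σ n).f X) := by
      intro X hX hXi
      obtain ⟨N, hN⟩ := hg X hX hXi
      rw [← hN _ (le_max_left N n)]
      exact (hσ n _ (le_max_right N n)).2 X (hX.trans (hDn _)) hXi
    have hlt' : ∀ X ⊆ ρ.A, X.Infinite → lt (ρ.f X) ((σ n).f X) := fun X hX hXi =>
      lll _ _ _ (hlt X hX hXi) (hfle X (hX.trans hBD) hXi)
    let A' : Set ℕ := {i ∈ (σ n).A | i < d+1} ∪ ρ.A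
    let f' : Set ℕ → Q := fun X => if X ⊆ ρ.A then ρ.f X else (σ n).f X
    have hA'n : A' ⊆ (σ n).A := Set.union_subset (fun i hi => hi.1) hBn
    have hA'B : ∀ X ⊆ A', (∀ i < d+1, i ∈ X → i ∈ ρ.A) → X ⊆ ρ.A := by
      intro X hX h i hi
      rcases hX hi with h' | h'
      · exact h i h'.2 hi
      · exact h'
    have hcont : Cont A' f' := by
      intro X hX hXi
      by_cases hXB : X ⊆ ρ.A
      · obtain ⟨k1, hk1⟩ := ρ.cont X hXB hXi
        refine ⟨max k1 (d+1), fun Y hY hYi hag => ?_⟩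
        have hYB : Y ⊆ ρ.A := hA'B Y hY fun i hi h =>
          hXB ((hag i (lt_of_lt_of_le hi (le_max_right _ _))).1 h)
        simp only [f', if_pos hXB, if_pos hYB]
        exact hk1 Y hYB hYi fun i hi => hag i (lt_of_lt_of_le hi (le_max_left _ _))
      · obtain ⟨k1, hk1⟩ := (σ n).cont X (hX.trans hA'n) hXi
        refine ⟨max k1 (d+1), fun Y hY hYi hag => ?_⟩
        have hYB : ¬ Y ⊆ ρ.A := fun hYB => hXB (hA'B X hX fun i hi h =>
          hYB ((hag i (lt_of_lt_of_le hi (le_max_right _ _))).2 h))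
        simp only [f', if_neg hXB, if_neg hYB]
        exact hk1 Y (hY.trans hA'n) hYi fun i hi => hag i (lt_of_lt_of_le hi (le_max_left _ _))
    have hbad : Bad R A' f' := by
      intro X hX hXi
      by_cases hXB : X ⊆ ρ.A
      · simp only [f', if_pos hXB, if_pos ((tl_sub X).trans hXB)]
        exact ρ.bad X hXB hXi
      · have h0 := (σ n).bad X (hX.trans hA'n) hXi
        simp only [f', if_neg hXB]
        split_ifs with htB
        · exact fun h => h0 (hR _ _ _ (hlt' _ htB (tl_inf hXi)) h)
        · exact h0
    refine hn ⟨A', f', ρ.inf.mono Set.subset_union_right, hcont, hbad⟩ ⟨hA'n, ?_⟩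
      (fun i hi h => Or.inl ⟨h, hi⟩) (ρ.f ρ.A) ?_ ρ.A hBn ρ.inf hsB (hlt' _ subset_rfl ρ.inf)
    · intro X hX hXi
      by_cases hXB : X ⊆ ρ.A
      · simp only [f', if_pos hXB]
        exact Or.inr (hlt' X hXB hXi)
      · simp only [f', if_neg hXB]
        exact Or.inl trivial
    · intro X hX hXi hst
      have hXB : X ⊆ ρ.A := hA'B X hX fun i hi h => (hsB i hi).2 ((hst i hi).1 h)
      simp only [f', if_pos hXB]
      exact hk0 X hXB hXi fun i hi => by rw [hst i (by omega), hsB i (by omega)]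

/-- Signed trees. -/
inductive T : Type
  | leaf (a : Bool) : T
  | sum (b : Bool) (c : ℕ → T) : T

/-- The quasi-order on trees. -/
inductive TR : T → T → Prop
  | leaf (a : Bool) : TR (T.leaf a) (T.leaf a)
  | sum (b : Bool) (c d : ℕ → T) (j : ℕ → ℕ) : (∀ i, TR (c i) (d (j i))) →
      TR (T.sum b c) (T.sum b d)
  | sub (x : T) (b : Bool) (d : ℕ → T) (j : ℕ) : TR x (d j) → TR x (T.sum b d)

def child : T → T → Prop
  | _, T.leaf _ => False
  | x, T.sum _ c => ∃ i, c i = x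

theorem child_wf : WellFounded child := by
  constructor
  intro x
  induction x with
  | leaf a => exact ⟨_, fun y h => h.elim⟩
  | sum b c ih =>
    refine ⟨_, fun y h => ?_⟩
    obtain ⟨i, rfl⟩ := h
    exact ih i

def T.isLeaf : T → Prop
  | T.leaf _ => True
  | T.sum _ _ => False

def T.sgn : T → Prop
  | T.leaf a => a = true
  | T.sum b _ => b = true

theorem move {x y : T} (h : ¬ TR x y) (hx : ¬ x.isLeaf) (hy : ¬ y.isLeaf) (hs : x.sgn ↔ y.sgn) :
    ∃ z, child z x ∧ ∀ w, child w y → ¬ TR z w := by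
  cases x with
  | leaf a => exact absurd trivial hx
  | sum b c =>
    cases y with
    | leaf a => exact absurd trivial hy
    | sum b' d =>
      have hb : b = b' := by
        simp only [T.sgn] at hs
        exact Bool.eq_iff_iff.2 hs
      subst hb
      by_contra hcon
      push Not at hcon
      have : ∀ i, ∃ j, TR (c i) (d j) := by
        intro i
        obtain ⟨w, ⟨j, rfl⟩, hw⟩ := hcon (c i) ⟨i, rfl⟩
        exact ⟨j, hw⟩
      choose j hj using this
      exact h (TR.sum b c d j hj)

theorem T_wqo (x : ℕ → T) : ∃ i j, i < j ∧ TR (x i) (x j) := by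
  classical
  by_contra hcon
  push Not at hcon
  let σ₀ : BadArr TR := ⟨Set.univ, fun X => x (sInf X), Set.infinite_univ, by
      intro X _ hi
      refine ⟨sInf X + 1, fun Y _ _ hag => ?_⟩
      simp only [(tl_agree hi.nonempty (Nat.lt_succ_self _) hag).1], by
      intro X _ hi
      refine hcon _ _ ?_
      have h1 : sInf (tl X) ∈ tl X := Nat.sInf_mem (tl_inf hi).nonempty
      have h2 : sInf X ≤ sInf (tl X) := Nat.sInf_le h1.1
      exact lt_of_le_of_ne h2 fun h => h1.2 h.symm⟩
  have hup : ∀ p a b, child a b → TR p a → TR p b := by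
    intro p a b h hp
    cases b with
    | leaf _ => exact h.elim
    | sum b c =>
      obtain ⟨i, rfl⟩ := h
      exact TR.sub p b c i hp
  obtain ⟨τ, hτ⟩ := minimal_bad TR (Relation.TransGen child) child_wf.transGen
    (fun a b c h1 h2 => h1.trans h2)
    (by
      intro p a b h hp
      induction h with
      | single h => exact hup _ _ _ h hp
      | tail _ h ih => exact hup _ _ _ h ih) σ₀
  obtain ⟨B1, hB1, hB1i, h1⟩ := ramsey_prop τ.inf τ.cont T.sgn
  obtain ⟨B2, hB2, hB2i, h2⟩ := ramsey_prop hB1i (τ.cont.mono hB1) T.isLeaf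
  have hsg : ∀ X ⊆ B2, X.Infinite → ((τ.f X).sgn ↔ (τ.f (tl X)).sgn) := by
    intro X hX hXi
    have a1 := hX.trans hB2
    have a2 := (tl_sub X).trans a1
    rcases h1 with h | h
    · exact iff_of_true (h X a1 hXi) (h _ a2 (tl_inf hXi))
    · exact iff_of_false (h X a1 hXi) (h _ a2 (tl_inf hXi))
  have hB2τ : B2 ⊆ τ.A := hB2.trans hB1
  rcases h2 with h2 | h2
  · have hb := τ.bad B2 hB2τ hB2i
    have hs := hsg B2 subset_rfl hB2i
    have l1 := h2 B2 subset_rfl hB2i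
    have l2 := h2 (tl B2) (tl_sub _) (tl_inf hB2i)
    revert hb hs l1 l2
    generalize τ.f B2 = u
    generalize τ.f (tl B2) = v
    intro hb hs l1 l2
    cases u with
    | sum _ _ => exact l1
    | leaf a =>
      cases v with
      | sum _ _ => exact l2
      | leaf a' =>
        have : a = a' := Bool.eq_iff_iff.2 hs
        subst this
        exact hb (TR.leaf a)
  · let μ : T → T → T := fun u v => if h : ∃ z, child z u ∧ ∀ w, child w v → ¬ TR z w then h.choose
      else u
    have hμ : ∀ X ⊆ B2, X.Infinite → child (μ (τ.f X) (τ.f (tl X))) (τ.f X) ∧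
        ∀ w, child w (τ.f (tl X)) → ¬ TR (μ (τ.f X) (τ.f (tl X))) w := by
      intro X hX hXi
      have hex := move (τ.bad X (hX.trans hB2τ) hXi) (h2 X hX hXi)
        (h2 _ ((tl_sub X).trans hX) (tl_inf hXi)) (hsg X hX hXi)
      simp only [μ, dif_pos hex]
      exact hex.choose_spec
    refine hτ ⟨B2, fun X => μ (τ.f X) (τ.f (tl X)), hB2i, ?_, ?_⟩ hB2τ ?_
    · intro X hX hXi
      obtain ⟨k1, hk1⟩ := τ.cont X (hX.trans hB2τ) hXi
      obtain ⟨k2, hk2⟩ := τ.cont (tl X) ((tl_sub X).trans (hX.trans hB2τ)) (tl_inf hXi)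
      refine ⟨max (max k1 k2) (sInf X + 1), fun Y hY hYi hag => ?_⟩
      have e1 := hk1 Y (hY.trans hB2τ) hYi fun i hi => hag i (by omega)
      have e2 := hk2 (tl Y) ((tl_sub Y).trans (hY.trans hB2τ)) (tl_inf hYi) fun i hi =>
        (tl_agree hXi.nonempty (by omega) hag).2 i (by omega)
      simp only [e1, e2]
    · intro X hX hXi
      exact (hμ X hX hXi).2 _ (hμ (tl X) ((tl_sub X).trans hX) (tl_inf hXi)).1
    · intro X hX hXi
      exact Relation.TransGen.single (hμ X hX hXi).1

end Laver

namespace Laver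

universe u

section
variable {L : Type*} [LinearOrder L] {L' : Type*} [LinearOrder L'] {L'' : Type*} [LinearOrder L'']

def Emb (s : Set L) (t : Set L') : Prop := ∃ F : L → L', StrictMonoOn F s ∧ Set.MapsTo F s t

lemma Emb.refl (s : Set L) : Emb s s := ⟨id, fun _ _ _ _ h => h, fun _ h => h⟩

lemma Emb.trans {s : Set L} {t : Set L'} {v : Set L''} : Emb s t → Emb t v → Emb s v := by
  rintro ⟨F, h1, h2⟩ ⟨G, h3, h4⟩
  exact ⟨G ∘ F, fun x hx y hy h => h3 (h2 hx) (h2 hy) (h1 hx hy h), fun x hx => h4 (h2 hx)⟩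

lemma Emb.mono {s : Set L} {t t' : Set L'} (h : Emb s t) (ht : t ⊆ t') : Emb s t' := by
  obtain ⟨F, h1, h2⟩ := h
  exact ⟨F, h1, fun x hx => ht (h2 hx)⟩

lemma emb_empty [Nonempty L'] (t : Set L') : Emb (∅ : Set L) t :=
  ⟨fun _ => Classical.arbitrary _, fun x hx => hx.elim, fun x hx => hx.elim⟩

def ltb (b : Bool) (u v : Set L) : Prop := ∀ a ∈ u, ∀ c ∈ v, if b then a < c else c < a

lemma ltb_not {b : Bool} {u v : Set L} : ltb (!b) u v ↔ ltb b v u := by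
  cases b <;> simp only [ltb] <;> constructor <;> intro h x hx y hy <;> simpa using h y hy x hx

lemma ltb.mono {b : Bool} {u v u' v' : Set L} (h : ltb b u v) (hu : u' ⊆ u) (hv : v' ⊆ v) :
    ltb b u' v' := fun a ha c hc => h a (hu ha) c (hv hc)

lemma glue {ι : Type*} [LinearOrder ι] [Nonempty ι] (b : Bool) (s : ι → Set L) (t : ι → Set L')
    (hs : ∀ i j, i < j → ltb b (s i) (s j)) (ht : ∀ i j, i < j → ltb b (t i) (t j))
    (h : ∀ i, Emb (s i) (t i)) : Emb (⋃ i, s i) (⋃ i, t i) := by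
  choose F h1 h2 using h
  have hg : ∀ x, ∃ i, x ∈ (⋃ i, s i) → x ∈ s i := by
    intro x
    by_cases hx : x ∈ ⋃ i, s i
    · obtain ⟨i, hi⟩ := Set.mem_iUnion.1 hx
      exact ⟨i, fun _ => hi⟩
    · exact ⟨Classical.arbitrary _, fun h => (hx h).elim⟩
  choose g hg using hg
  refine ⟨fun x => F (g x) x, ?_, fun x hx => Set.mem_iUnion.2 ⟨g x, h2 _ (hg x hx)⟩⟩
  intro x hx y hy hxy
  have hx' := hg x hx
  have hy' := hg y hy
  show F (g x) x < F (g y) y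
  rcases lt_trichotomy (g x) (g y) with hlt | heq | hlt
  · have a1 := hs _ _ hlt x hx' y hy'
    have a2 := ht _ _ hlt _ (h2 _ hx') _ (h2 _ hy')
    cases b
    · exact absurd hxy (lt_asymm (by simpa using a1))
    · simpa using a2
  · rw [heq] at hx' ⊢
    exact h1 _ hx' hy' hxy
  · have a1 := hs _ _ hlt y hy' x hx'
    have a2 := ht _ _ hlt _ (h2 _ hy') _ (h2 _ hx')
    cases b
    · simpa using a2
    · exact absurd hxy (lt_asymm (by simpa using a1))

lemma glue2 (b : Bool) {s s' : Set L} {t t' : Set L'} (hs : ltb b s s') (ht : ltb b t t')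
    (h : Emb s t) (h' : Emb s' t') : Emb (s ∪ s') (t ∪ t') := by
  have := glue (ι := Bool) b (fun i => bif i then s' else s) (fun i => bif i then t' else t)
    (by
      intro i j hij
      cases i <;> cases j
      · exact absurd hij (lt_irrefl _)
      · exact hs
      · exact absurd hij (by decide)
      · exact absurd hij (lt_irrefl _))
    (by
      intro i j hij
      cases i <;> cases j
      · exact absurd hij (lt_irrefl _)
      · exact ht
      · exact absurd hij (by decide)
      · exact absurd hij (lt_irrefl _))
    (by intro i; cases i <;> simp_all)
  rw [← Set.union_eq_iUnion, ← Set.union_eq_iUnion] at this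
  rwa [Set.union_comm, Set.union_comm t]

inductive Rep {L : Type*} [LinearOrder L] : T → Set L → Prop
  | empty : Rep (T.leaf false) ∅
  | single (a : L) : Rep (T.leaf true) {a}
  | sum (b : Bool) (c : ℕ → T) (s : ℕ → Set L) (hs : ∀ i j, i < j → ltb b (s i) (s j))
      (hr : ∀ n, Rep (c n) (s n)) (hi : ∀ i n, ∃ j ≥ n, Emb (s i) (s j)) :
      Rep (T.sum b c) (⋃ n, s n)

lemma rep_emb [Nonempty L'] {x y : T} (h : TR x y) :
    ∀ {s : Set L} {t : Set L'}, Rep x s → Rep y t → Emb s t := by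
  induction h with
  | leaf a =>
    intro s t hs ht
    cases hs with
    | empty => exact emb_empty _
    | single a =>
      cases ht with
      | single c => exact ⟨fun _ => c, by simp [StrictMonoOn], fun _ _ => rfl⟩
  | sum b c d j hj ih =>
    intro s t hs ht
    cases hs with
    | sum _ _ s hs hr hi =>
    cases ht with
    | sum _ _ t ht hr' hi' =>
      have key : ∀ i n, ∃ m > n, Emb (s i) (t m) := by
        intro i n
        obtain ⟨m, hm, e⟩ := hi' (j i) (n+1)
        exact ⟨m, hm, (ih i (hr i) (hr' _)).trans e⟩
      choose g hg1 hg2 using key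
      let k : ℕ → ℕ := fun n => Nat.rec (g 0 0) (fun i p => g (i+1) p) n
      have hk : StrictMono k := strictMono_nat_of_lt_succ fun n => hg1 _ _
      have hke : ∀ i, Emb (s i) (t (k i)) := by
        intro i
        cases i with
        | zero => exact hg2 _ _
        | succ i => exact hg2 _ _
      refine (glue b s (fun i => t (k i)) hs (fun i j hij => ht _ _ (hk hij)) hke).mono ?_
      exact Set.iUnion_subset fun i => Set.subset_iUnion t (k i)
  | sub x b d j h ih =>
    intro s t hs ht
    cases ht with
    | sum _ _ t ht hr' hi' => exact (ih hs (hr' j)).mono (Set.subset_iUnion t j)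

def Good (s : Set L) : Prop := ∃ x, Rep x s

end

lemma good_wqo (L : ℕ → Type*) [∀ i, LinearOrder (L i)] [∀ i, Nonempty (L i)]
    (s : ∀ i, Set (L i)) (hs : ∀ i, Good (s i)) : ∃ i j, i < j ∧ Emb (s i) (s j) := by
  choose x hx using hs
  obtain ⟨i, j, hij, h⟩ := T_wqo x
  exact ⟨i, j, hij, rep_emb h (hx i) (hx j)⟩

section
variable {L : Type*} [LinearOrder L]

def FS (b : Bool) (s : Set L) : Prop :=
  ∃ P : List (Set L), P.Pairwise (ltb b) ∧ (∀ u ∈ P, Good u) ∧ s = ⋃ u ∈ P, u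

lemma FS.flip {b : Bool} {s : Set L} (h : FS b s) : FS (!b) s := by
  obtain ⟨P, h1, h2, h3⟩ := h
  refine ⟨P.reverse, ?_, by simpa using h2, by simpa using h3⟩
  rw [List.pairwise_reverse]
  exact h1.imp fun h => ltb_not.2 h

lemma FS.any {b : Bool} {s : Set L} (h : FS b s) (b' : Bool) : FS b' s := by
  cases b <;> cases b'
  · exact h
  · exact h.flip
  · exact h.flip
  · exact h

inductive HC {L : Type*} [LinearOrder L] : Set L → Prop
  | sub (s : Set L) : s.Subsingleton → HC s
  | sum (b : Bool) (s : ℕ → Set L) (hs : ∀ i j, i < j → ltb b (s i) (s j))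
      (h : ∀ n, HC (s n)) : HC (⋃ n, s n)

lemma HC.mono {s t : Set L} (h : HC s) (hts : t ⊆ s) : HC t := by
  induction h generalizing t with
  | sub s hs => exact HC.sub _ (hs.anti hts)
  | sum b s hs _ ih =>
    have : t = ⋃ n, t ∩ s n := by
      rw [← Set.inter_iUnion, Set.inter_eq_left.2 hts]
    rw [this]
    exact HC.sum b _ (fun i j hij => (hs i j hij).mono Set.inter_subset_right
      Set.inter_subset_right) fun n => ih n Set.inter_subset_right

lemma HC.union {s t : Set L} (hs : HC s) (ht : HC t) (h : ltb true s t) : HC (s ∪ t) := by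
  have e : s ∪ t = ⋃ n : ℕ, (if n = 0 then s else if n = 1 then t else ∅) := by
    ext x
    simp only [Set.mem_union, Set.mem_iUnion]
    constructor
    · rintro (h | h)
      · exact ⟨0, by simpa using h⟩
      · exact ⟨1, by simpa using h⟩
    · rintro ⟨n, hn⟩
      split_ifs at hn
      · exact Or.inl hn
      · exact Or.inr hn
      · exact hn.elim
  rw [e]
  refine HC.sum true _ ?_ ?_
  · intro i j hij
    by_cases hj : j = 1
    · obtain rfl : i = 0 := by omega
      subst hj
      simpa using h
    · have : j ≠ 0 := by omega
      simp [hj, this, ltb]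
  · intro n
    split_ifs
    · exact hs
    · exact ht
    · exact HC.sub _ Set.subsingleton_empty

/-- An ordered sequence of good sets is a finite sum of good sets. -/
lemma FS_seq (b : Bool) (u : ℕ → Set L) (hu : ∀ i j, i < j → ltb b (u i) (u j))
    (hg : ∀ n, Good (u n)) : FS b (⋃ n, u n) := by
  rcases isEmpty_or_nonempty L with hL | hL
  · exact ⟨[], by simp, by simp, Subsingleton.elim _ _⟩
  have hN : ∃ N, ∀ n ≥ N, ∀ m, ∃ j ≥ m, Emb (u n) (u j) := by
    by_contra hcon
    push Not at hcon
    choose f hf g hg' using hcon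
    let p : ℕ → ℕ := fun n => Nat.rec 0 (fun _ p => max (f p + 1) (g p)) n
    have hp1 : ∀ n, g (p n) ≤ p (n+1) := fun n => le_max_right _ _
    have hp2 : ∀ n, f (p n) + 1 ≤ p (n+1) := fun n => le_max_left _ _
    have hp : Monotone p := monotone_nat_of_le_succ fun n => by
      have := hf (p n)
      have := hp2 n
      omega
    obtain ⟨i, j, hij, h⟩ := good_wqo (fun _ => L) (fun n => u (f (p n))) (fun n => hg _)
    exact hg' (p i) _ ((hp1 i).trans ((hp (Nat.succ_le_of_lt hij)).trans (hf (p j)))) h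
  obtain ⟨N, hN⟩ := hN
  choose x hx using hg
  refine ⟨(List.range N).map u ++ [⋃ n, u (N + n)], ?_, ?_, ?_⟩
  · rw [List.pairwise_append]
    refine ⟨?_, by simp, ?_⟩
    · rw [List.pairwise_map]
      exact (List.pairwise_lt_range).imp fun h => hu _ _ h
    · intro v hv w hw
      simp only [List.mem_map, List.mem_range, List.mem_singleton] at hv hw
      obtain ⟨i, hi, rfl⟩ := hv
      subst hw
      intro a ha c hc
      obtain ⟨n, hn⟩ := Set.mem_iUnion.1 hc
      exact hu i (N+n) (by omega) a ha c hn
  · intro v hv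
    simp only [List.mem_append, List.mem_map, List.mem_range, List.mem_singleton] at hv
    rcases hv with ⟨i, hi, rfl⟩ | rfl
    · exact ⟨x i, hx i⟩
    · refine ⟨T.sum b fun n => x (N+n), Rep.sum b _ _ (fun i j h => hu _ _ (by omega))
        (fun n => hx _) fun i n => ?_⟩
      obtain ⟨j, hj, h⟩ := hN (N+i) (by omega) (N+n)
      refine ⟨j - N, by omega, ?_⟩
      rwa [Nat.add_sub_cancel' (by omega)]
  · ext y
    simp only [Set.mem_iUnion, List.mem_append, List.mem_map, List.mem_range,
      List.mem_singleton, exists_prop]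
    constructor
    · rintro ⟨i, hi⟩
      by_cases h : i < N
      · exact ⟨u i, Or.inl ⟨i, h, rfl⟩, hi⟩
      · refine ⟨_, Or.inr rfl, Set.mem_iUnion.2 ⟨i - N, ?_⟩⟩
        rwa [Nat.add_sub_cancel' (by omega)]
    · rintro ⟨v, ⟨i, _, rfl⟩ | rfl, hy⟩
      · exact ⟨i, hy⟩
      · obtain ⟨n, hn⟩ := Set.mem_iUnion.1 hy
        exact ⟨_, hn⟩


lemma HC.fs {s : Set L} (h : HC s) : ∀ b, FS b s := by
  induction h with
  | sub s hs =>
    intro b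
    rcases hs.eq_empty_or_singleton with rfl | ⟨a, rfl⟩
    · exact ⟨[], by simp, by simp, by simp⟩
    · exact ⟨[{a}], by simp, by simpa using ⟨_, Rep.single a⟩, by simp⟩
  | sum b s hs _ ih =>
    intro b'
    refine FS.any ?_ b' (b := b)
    have hP : ∀ n, ∃ P : List (Set L), P ≠ [] ∧ P.Pairwise (ltb b) ∧ (∀ u ∈ P, Good u) ∧
        s n = ⋃ u ∈ P, u := by
      intro n
      obtain ⟨P, h1, h2, h3⟩ := ih n b
      refine ⟨∅ :: P, by simp, ?_, ?_, ?_⟩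
      · refine List.pairwise_cons.2 ⟨fun u _ a ha => ha.elim, h1⟩
      · intro u hu
        rcases List.mem_cons.1 hu with rfl | hu
        · exact ⟨_, Rep.empty⟩
        · exact h2 u hu
      · rw [h3]; simp
    choose P hP0 hP1 hP2 hP3 using hP
    let F : ℕ → List (Set L) := fun k => ((List.range k).map P).flatten
    have hFs : ∀ k, F (k+1) = F k ++ P k := by
      intro k
      simp [F, List.range_succ]
    have hFm : ∀ k v, v ∈ F k ↔ ∃ i < k, v ∈ P i := by
      intro k v
      simp [F]
    have hsub : ∀ i v, v ∈ P i → v ⊆ s i := by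
      intro i v hv
      rw [hP3 i]
      exact Set.subset_biUnion_of_mem (u := fun u => u) hv
    have hFl : ∀ k, k ≤ (F k).length := by
      intro k
      induction k with
      | zero => simp
      | succ k ih =>
        rw [hFs, List.length_append]
        have := List.length_pos_of_ne_nil (hP0 k)
        omega
    have hFp : ∀ k, (F k).Pairwise (ltb b) := by
      intro k
      induction k with
      | zero => simp [F]
      | succ k ih =>
        rw [hFs, List.pairwise_append]
        refine ⟨ih, hP1 k, fun u hu v hv => ?_⟩
        obtain ⟨i, hi, hui⟩ := (hFm _ _).1 hu
        exact (hs i k hi).mono (hsub _ _ hui) (hsub _ _ hv)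
    have hpre : ∀ k m, k ≤ m → F k <+: F m := by
      intro k m hkm
      induction m, hkm using Nat.le_induction with
      | base => exact List.prefix_rfl
      | succ m _ ih => exact ih.trans (by rw [hFs]; exact List.prefix_append _ _)
    let u : ℕ → Set L := fun k => (F (k+1))[k]'(hFl (k+1))
    have hu1 : ∀ k m (h : k < (F m).length), (F m)[k] = u k := by
      intro k m h
      have e1 := (hpre m (max m (k+1)) (le_max_left _ _)).getElem h
      have e2 := (hpre (k+1) (max m (k+1)) (le_max_right _ _)).getElem (hFl (k+1))
      exact e1.trans e2.symm
    have hu2 : ∀ k, ∃ i, u k ∈ P i := by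
      intro k
      obtain ⟨i, _, hi⟩ := (hFm (k+1) (u k)).1 (List.getElem_mem _)
      exact ⟨i, hi⟩
    have hU : (⋃ n, s n) = ⋃ k, u k := by
      apply Set.Subset.antisymm
      · refine Set.iUnion_subset fun n x hx => ?_
        rw [hP3 n] at hx
        simp only [Set.mem_iUnion, exists_prop] at hx
        obtain ⟨v, hv, hx⟩ := hx
        have hv' : v ∈ F (n+1) := (hFm _ _).2 ⟨n, by omega, hv⟩
        obtain ⟨k, hk, rfl⟩ := List.getElem_of_mem hv'
        rw [hu1] at hx
        exact Set.mem_iUnion.2 ⟨k, hx⟩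
      · refine Set.iUnion_subset fun k => ?_
        obtain ⟨i, hi⟩ := hu2 k
        exact (hsub i _ hi).trans (Set.subset_iUnion s i)
    rw [hU]
    refine FS_seq b u ?_ ?_
    · intro i j hij
      have hj : j < (F (j+1)).length := hFl (j+1)
      have := List.pairwise_iff_getElem.1 (hFp (j+1)) i j (hij.trans hj) hj hij
      rwa [hu1, hu1] at this
    · intro k
      obtain ⟨i, hi⟩ := hu2 k
      exact hP2 i _ hi

end

lemma list_glue {L L' : Type*} [LinearOrder L] [LinearOrder L'] [Nonempty L']
    {P : List (Set L)} {Q : List (Set L')} (h : List.SublistForall₂ Emb P Q)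
    (hP : P.Pairwise (ltb true)) (hQ : Q.Pairwise (ltb true)) :
    Emb (⋃ u ∈ P, u) (⋃ u ∈ Q, u) := by
  induction h with
  | nil => simpa using emb_empty _
  | cons h1 _ ih =>
    rw [List.pairwise_cons] at hP hQ
    simp only [List.mem_cons, Set.iUnion_iUnion_eq_or_left]
    refine glue2 true ?_ ?_ h1 (ih hP.2 hQ.2)
    · intro a ha c hc
      simp only [Set.mem_iUnion, exists_prop] at hc
      obtain ⟨v, hv, hc⟩ := hc
      exact hP.1 v hv a ha c hc
    · intro a ha c hc
      simp only [Set.mem_iUnion, exists_prop] at hc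
      obtain ⟨v, hv, hc⟩ := hc
      exact hQ.1 v hv a ha c hc
  | cons_right _ ih =>
    rw [List.pairwise_cons] at hQ
    refine (ih hP hQ.2).mono ?_
    simp only [List.mem_cons, Set.iUnion_iUnion_eq_or_left]
    exact Set.subset_union_right

lemma hc_wqo (L : ℕ → Type*) [∀ i, LinearOrder (L i)] [∀ i, Nonempty (L i)]
    (h : ∀ i, HC (Set.univ : Set (L i))) : ∃ i j, i < j ∧ Nonempty (L i ↪o L j) := by
  choose P h1 h2 h3 using fun i => (h i).fs true
  let r : (Σ i, Set (L i)) → (Σ i, Set (L i)) → Prop := fun p q => Emb p.2 q.2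
  have : IsPreorder _ r :=
    { refl := fun p => Emb.refl _
      trans := fun p q v h h' => Emb.trans h h' }
  have hw : Set.PartiallyWellOrderedOn {p : Σ i, Set (L i) | Good p.2} r := by
    intro f
    exact good_wqo (fun n => L (f n).1.1) (fun n => (f n).1.2) fun n => (f n).2
  have hH := Set.PartiallyWellOrderedOn.partiallyWellOrderedOn_sublistForall₂ r hw
  obtain ⟨i, j, hij, hl⟩ := hH (fun i => ⟨(P i).map fun v => ⟨i, v⟩, by
    intro x hx
    obtain ⟨v, hv, rfl⟩ := List.mem_map.1 hx
    exact h2 i v hv⟩)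
  replace hl : List.SublistForall₂ r ((P i).map fun v => ⟨i, v⟩) ((P j).map fun v => ⟨j, v⟩) := hl
  have hl' : List.SublistForall₂ Emb (P i) (P j) := by
    rw [List.sublistForall₂_iff] at hl ⊢
    obtain ⟨l, hl1, hl2⟩ := hl
    obtain ⟨l', hl', rfl⟩ := List.sublist_map_iff.1 hl2
    refine ⟨l', ?_, hl'⟩
    rwa [List.forall₂_map_left_iff, List.forall₂_map_right_iff] at hl1
  have := list_glue hl' (h1 i) (h1 j)
  rw [← h3, ← h3] at this
  obtain ⟨G, hG, _⟩ := this
  exact ⟨i, j, hij, ⟨OrderEmbedding.ofStrictMono G fun x y hxy =>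
    hG (Set.mem_univ _) (Set.mem_univ _) hxy⟩⟩

end Laver

namespace Laver

section
variable {L : Type*} [LinearOrder L]

lemma hc_Icc_trans {a b c : L} (h : HC (Set.Icc a b)) (h' : HC (Set.Icc b c)) :
    HC (Set.Icc a c) := by
  refine (HC.union h (h'.mono (Set.inter_subset_left (t := Set.Ioi b))) ?_).mono ?_
  · intro x hx y hy
    simpa using hx.2.trans_lt hy.2
  · intro x hx
    rcases le_or_gt x b with hb | hb
    · exact Or.inl ⟨hx.1, hb⟩
    · exact Or.inr ⟨⟨hb.le, hx.2⟩, hb⟩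

def R (a b : L) : Prop := HC (Set.Icc a b) ∧ HC (Set.Icc b a)

lemma R.refl (a : L) : R a a := ⟨HC.sub _ (by simp), HC.sub _ (by simp)⟩

lemma R.symm {a b : L} (h : R a b) : R b a := ⟨h.2, h.1⟩

lemma R.trans {a b c : L} (h : R a b) (h' : R b c) : R a c :=
  ⟨hc_Icc_trans h.1 h'.1, hc_Icc_trans h'.2 h.2⟩

lemma R.of_le {a b : L} (hab : a ≤ b) (h : HC (Set.Icc a b)) : R a b :=
  ⟨h, HC.sub _ (Set.subsingleton_Icc_of_ge hab)⟩

lemma hc_of_upper [Countable L] (a : L) (U : Set L) (h : ∀ x ∈ U, HC (U ∩ Set.Iic x)) : HC U := by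
  rcases U.eq_empty_or_nonempty with rfl | hne
  · exact HC.sub _ Set.subsingleton_empty
  obtain ⟨f, rfl⟩ := (Set.to_countable U).exists_eq_range hne
  have e : Set.range f = ⋃ n, {x ∈ Set.range f | x ≤ f n ∧ ∀ m < n, f m < x} := by
    ext x
    simp only [Set.mem_iUnion]
    constructor
    · intro hx
      have hex : ∃ n, x ≤ f n := by
        obtain ⟨n, rfl⟩ := hx
        exact ⟨n, le_rfl⟩
      classical
      exact ⟨Nat.find hex, hx, Nat.find_spec hex, fun m hm => not_le.1 (Nat.find_min hex hm)⟩
    · rintro ⟨n, hn⟩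
      exact hn.1
  rw [e]
  refine HC.sum true _ ?_ fun n => (h (f n) ⟨n, rfl⟩).mono fun x hx => ⟨hx.1, hx.2.1⟩
  intro i j hij x hx y hy
  simpa using hx.2.1.trans_lt (hy.2.2 i hij)

lemma hc_of_lower [Countable L] (a : L) (U : Set L) (h : ∀ x ∈ U, HC (U ∩ Set.Ici x)) : HC U := by
  rcases U.eq_empty_or_nonempty with rfl | hne
  · exact HC.sub _ Set.subsingleton_empty
  obtain ⟨f, rfl⟩ := (Set.to_countable U).exists_eq_range hne
  have e : Set.range f = ⋃ n, {x ∈ Set.range f | f n ≤ x ∧ ∀ m < n, x < f m} := by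
    ext x
    simp only [Set.mem_iUnion]
    constructor
    · intro hx
      have hex : ∃ n, f n ≤ x := by
        obtain ⟨n, rfl⟩ := hx
        exact ⟨n, le_rfl⟩
      classical
      exact ⟨Nat.find hex, hx, Nat.find_spec hex, fun m hm => not_le.1 (Nat.find_min hex hm)⟩
    · rintro ⟨n, hn⟩
      exact hn.1
  rw [e]
  refine HC.sum false _ ?_ fun n => (h (f n) ⟨n, rfl⟩).mono fun x hx => ⟨hx.1, hx.2.1⟩
  intro i j hij x hx y hy
  simpa using (hy.2.2 i hij).trans_le hx.2.1

lemma class_hc [Countable L] (a : L) : HC {x | R a x} := by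
  have h1 : HC ({x | R a x} ∩ Set.Ici a) := hc_of_upper a _ fun x hx =>
    hx.1.1.mono fun y hy => ⟨hy.1.2, hy.2⟩
  have h2 : HC ({x | R a x} ∩ Set.Iio a) := hc_of_lower a _ fun x hx =>
    hx.1.2.mono fun y hy => ⟨hy.2, hy.1.2.le⟩
  refine (HC.union h2 h1 ?_).mono fun x hx => ?_
  · intro x hx y hy
    simpa using lt_of_lt_of_le hx.2 hy.2
  · rcases lt_or_ge x a with h | h
    · exact Or.inl ⟨hx, h⟩
    · exact Or.inr ⟨hx, h⟩

lemma between [Countable L] {x y : L} (hxy : x < y) (h : ¬ R x y) :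
    ∃ w, x ≤ w ∧ w ≤ y ∧ ¬ R x w ∧ ¬ R w y := by
  by_contra hcon
  push Not at hcon
  refine h (R.of_le hxy.le ?_)
  have h1 : HC ({w | R x w} ∩ Set.Icc x y) := (class_hc x).mono Set.inter_subset_left
  have h2 : HC ({w | R y w} ∩ Set.Icc x y) := (class_hc y).mono Set.inter_subset_left
  refine (HC.union h1 h2 ?_).mono fun w hw => ?_
  · intro u hu v hv
    simp only [if_true]
    by_contra huv
    push Not at huv
    have : R x v := R.of_le hv.2.1 (hu.1.1.mono (Set.Icc_subset_Icc_right huv))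
    exact h (this.trans hv.1.symm)
  · by_cases hw' : R x w
    · exact Or.inl ⟨hw', hw⟩
    · exact Or.inr ⟨(hcon w hw.1 hw.2 hw').symm, hw⟩

lemma emb_of_not_hc [Countable L] (h : ¬ HC (Set.univ : Set L)) (M : Type*) [LinearOrder M]
    [Countable M] : Nonempty (M ↪o L) := by
  let S : Setoid L := ⟨R, ⟨R.refl, R.symm, R.trans⟩⟩
  let ρ : L → L := fun x => (Quotient.mk S x).out
  have hρ : ∀ x, R (ρ x) x := fun x => Quotient.exact (Quotient.out_eq (Quotient.mk S x))
  have hρ' : ∀ x y, R x y → ρ x = ρ y := fun x y hxy => by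
    show (Quotient.mk S x).out = (Quotient.mk S y).out
    rw [Quotient.sound (s := S) hxy]
  let D := Set.range ρ
  have hD : ∀ x ∈ D, ∀ y ∈ D, R x y → x = y := by
    rintro _ ⟨x, rfl⟩ _ ⟨y, rfl⟩ hxy
    exact hρ' _ _ ((hρ x).symm.trans (hxy.trans (hρ y)))
  have : DenselyOrdered D := ⟨by
    rintro ⟨x, hx⟩ ⟨y, hy⟩ hxy
    have hxy' : x < y := hxy
    obtain ⟨w, h1, h2, h3, h4⟩ := between hxy' fun hr => hxy'.ne (hD x hx y hy hr)
    refine ⟨⟨ρ w, w, rfl⟩, ?_, ?_⟩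
    · show x < ρ w
      by_contra hc
      push Not at hc
      exact h3 (R.of_le h1 ((hρ w).1.mono (Set.Icc_subset_Icc_left hc)))
    · show ρ w < y
      by_contra hc
      push Not at hc
      exact h4 (R.of_le h2 ((hρ w).2.mono (Set.Icc_subset_Icc_right hc)))⟩
  have : Nontrivial D := by
    by_contra hn
    rw [not_nontrivial_iff_subsingleton] at hn
    apply h
    rcases isEmpty_or_nonempty L with hL | ⟨⟨a⟩⟩
    · exact HC.sub _ fun x => (hL.false x).elim
    · refine (class_hc a).mono fun x _ => ?_
      have e : ρ a = ρ x := congrArg Subtype.val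
        (Subsingleton.elim (⟨ρ a, a, rfl⟩ : D) ⟨ρ x, x, rfl⟩)
      have := hρ a
      rw [e] at this
      exact this.symm.trans (hρ x)
  obtain ⟨e⟩ := Order.embedding_from_countable_to_dense (α := M) (β := D)
  exact ⟨e.trans (OrderEmbedding.subtype _)⟩

end
end Laver

/-- The countable linear orders are well quasi-ordered by embeddability. -/
theorem countable_linear_orders_wqo (L : ℕ → Type*) [∀ i, LinearOrder (L i)]
    [∀ i, Countable (L i)] :
    ∃ i j : ℕ, i < j ∧ Nonempty (L i ↪o L j) := by
  by_cases he : ∃ i, IsEmpty (L i)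
  · obtain ⟨i, hi⟩ := he
    exact ⟨i, i + 1, Nat.lt_succ_self i, ⟨OrderEmbedding.ofIsEmpty⟩⟩
  push Not at he
  by_cases hH : ∀ i, Laver.HC (Set.univ : Set (L (i + 1)))
  · obtain ⟨i, j, hij, h⟩ := Laver.hc_wqo (fun i => L (i + 1)) hH
    exact ⟨i + 1, j + 1, by omega, h⟩
  · push Not at hH
    obtain ⟨i, hi⟩ := hH
    exact ⟨0, i + 1, by omega, Laver.emb_of_not_hc hi _⟩
end
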